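/- For every j₀ ∈ ℚ there exists a constant c > 0, depending only on j₀, with the following property: for every elliptic curve E over ℚ with j-invariant equal to j₀, every integer N ≥ 1, and every sequence P₁,…,P_N of affine points of E(ℚ) whose x-coordinates form a non-trivial arithmetic progression, or whose y-coordinates form a non-trivial arithmetic progression, one has 1 + rank E(ℚ) ≥ c · log N. -/

import Mathlib

open scoped TensorProduct

/-- The rank of an abelian group `G`, i.e. `dim_ℚ (G ⊗_ℤ ℚ)`. -/
noncomputable def grpRank (G : Type*) [AddCommGroup G] : ℕ :=
  Module.finrank ℚ (ℚ ⊗[ℤ] G)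

/-- `u 0, …, u (N-1)` is a non-trivial arithmetic progression: there are `a` and `b ≠ 0`
with `uᵢ = a + i·b` (for the `1`-based index `i`). -/
def IsNontrivAP {F : Type*} [Field F] {N : ℕ} (u : Fin N → F) : Prop :=
  ∃ a b : F, b ≠ 0 ∧ ∀ i : Fin N, u i = a + (((i : ℕ) + 1 : ℕ) : F) * b

/-!
Pass to a short model `Y² = X³ + aX + b` and measure `X`-coordinates at every place against the
twelfth root of the discriminant. This gives a height `h` on `E(ℚ)` that is quadratic up to errors
depending only on the `j`-invariant. Write `L = log N + O(1)`, the constant again depending on `j`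
only.

If `X(Pₖ)` is affine in `k`, a linear relation with small integer coefficients between three
`X`-coordinates gives `h(P_c) ≤ h(P_u) + h(P_v) + L`, so that all heights but the smallest are
comparable, and local estimates for the chord through `P_c` give the repulsion
`h(P_c) ≤ h(P_u - P_c) + h(P_v - P_c) + L`, so that no three points cluster around `P_c`. On the
other hand, in a group of rank `r` a fraction `C⁻ʳ` of any set of points of comparable height lies
in one small ball. Such a ball contains at most two of the `Pₖ` when the heights are large compared
to `L`, and otherwise its radius can be taken a small multiple of `L`, so that it contains only
`O(√N)` rational points. Hence `N = O(Cʳ √N)`.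

If `Y(Pₖ)` is affine in `k`, the same argument works with four points instead of three, unless
the points `(k, X)` involved are collinear, when the `X`-coordinates themselves form a progression.

The packing argument needs the indices `[E(ℚ) : 2ᵏE(ℚ)]`, hence the Mordell–Weil theorem, which is
proved by 2-descent over the fields `ℚ(θ)` with `θ` running through the roots of `X³ + aX + b`.
-/

namespace ProgressionRank

/-! ### Places and positive ideles of `ℚ` -/

section Places

open NumberField Function

/-- The places of `ℚ`; `none` is the archimedean one. -/
abbrev Place := Option (FinitePlace ℚ)

/-- The normalised absolute value at a place. -/
noncomputable def Place.abs : Place → AbsoluteValue ℚ ℝ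
  | none => Rat.AbsoluteValue.real
  | some v => v.val

namespace Place

lemma abs_none (q : ℚ) : abs none q = |(q : ℝ)| := by
  simp [abs, Rat.AbsoluteValue.real_eq_abs]

lemma isNonarchimedean_abs_some (v : FinitePlace ℚ) : IsNonarchimedean (abs (some v)) :=
  FinitePlace.add_le v

lemma hasFiniteMulSupport_of_some {M : Type*} [One M] {f : Place → M}
    (hf : HasFiniteMulSupport fun v : FinitePlace ℚ ↦ f (some v)) : HasFiniteMulSupport f := by
  refine ((hf.image some).insert none).subset fun v hv ↦ ?_
  cases v with
  | none => exact Set.mem_insert _ _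
  | some v => exact Set.mem_insert_of_mem _ ⟨v, hv, rfl⟩

lemma hasFiniteMulSupport_abs {q : ℚ} (hq : q ≠ 0) : HasFiniteMulSupport fun v ↦ abs v q :=
  hasFiniteMulSupport_of_some (FinitePlace.hasFiniteMulSupport hq)

lemma finsum_log_abs_eq_zero {q : ℚ} (hq : q ≠ 0) : ∑ᶠ v, Real.log (abs v q) = 0 := by
  have hfin : HasFiniteMulSupport fun v : FinitePlace ℚ ↦ v q :=
    FinitePlace.hasFiniteMulSupport hq
  have hfin_log : HasFiniteSupport fun v : FinitePlace ℚ ↦ Real.log (v q) :=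
    hfin.subset fun v hv h ↦ hv (by simp only [h, Real.log_one])
  have hlog : ∑ᶠ v : FinitePlace ℚ, Real.log (v q) = Real.log (∏ᶠ v : FinitePlace ℚ, v q) := by
    rw [finprod_eq_prod _ hfin, Real.log_prod fun v _ ↦ by simpa using hq]
    exact finsum_eq_sum_of_support_subset _ fun v hv ↦ (Set.Finite.mem_toFinset hfin).mpr
      fun h ↦ hv (by simp only [h, Real.log_one])
  have hinf : ∏ w : InfinitePlace ℚ, w q ^ w.mult = |(q : ℝ)| := by
    rw [Fintype.prod_subsingleton _ Rat.infinitePlace]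
    simp [Rat.infinitePlace_apply, InfinitePlace.mult, Rat.isReal_infinitePlace]
  have hprod := prod_abs_eq_one hq
  rw [hinf] at hprod
  rw [finsum_option hfin_log, abs_none]
  change Real.log |(q : ℝ)| + ∑ᶠ v : FinitePlace ℚ, Real.log (v q) = 0
  rw [hlog, ← Real.log_mul (left_ne_zero_of_mul_eq_one hprod) (right_ne_zero_of_mul_eq_one hprod),
    hprod, Real.log_one]

end Place

/-- The group of families of positive reals indexed by the places of `ℚ`, almost all equal
to `1`. -/
def posIdeles : Subgroup (Place → {r : ℝ // 0 < r}) where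
  carrier := {f | HasFiniteMulSupport f}
  mul_mem' hf hg := HasFiniteMulSupport.mul hf hg
  one_mem' := hasFiniteMulSupport_fun_one
  inv_mem' hf := HasFiniteMulSupport.inv hf

/-- Positive real ideles of `ℚ`. Local inequalities are inequalities between such families, and
`PosIdele.deg` turns them into inequalities between heights. -/
abbrev PosIdele : Type := posIdeles

namespace PosIdele

/-- The component of a positive idele at a place. -/
def component (f : PosIdele) (v : Place) : ℝ := f.1 v

instance : CoeFun PosIdele fun _ ↦ Place → ℝ := ⟨component⟩

variable (f g : PosIdele) (v : Place)

lemma pos : 0 < f v := (f.1 v).2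

@[simp] lemma mul_apply : (f * g) v = f v * g v := rfl

@[simp] lemma div_apply : (f / g) v = f v / g v :=
  (congrArg Subtype.val (div_eq_mul_inv (f.1 v) (g.1 v))).trans (div_eq_mul_inv _ _).symm

@[simp] lemma pow_apply (n : ℕ) : (f ^ n) v = f v ^ n := rfl

lemma hasFiniteSupport_log : HasFiniteSupport fun v ↦ Real.log (f v) :=
  Set.Finite.subset f.2 fun v hv h ↦ hv (by
    simp only [component, h, Positive.val_one, Real.log_one])

/-- The degree of a positive idele: the sum of the logarithms of its components. -/
noncomputable def deg : ℝ := ∑ᶠ v, Real.log (f v)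

@[simp] lemma deg_mul : (f * g).deg = f.deg + g.deg := by
  rw [deg, deg, deg, ← finsum_add_distrib f.hasFiniteSupport_log g.hasFiniteSupport_log]
  exact finsum_congr fun v ↦ by rw [mul_apply, Real.log_mul (f.pos v).ne' (g.pos v).ne']

@[simp] lemma deg_div : (f / g).deg = f.deg - g.deg := by
  rw [eq_sub_iff_add_eq, ← deg_mul, div_mul_cancel]

@[simp] lemma deg_pow (n : ℕ) : (f ^ n).deg = n * f.deg := by
  induction n with
  | zero => simp [deg, component]
  | succ n ih => rw [pow_succ, deg_mul, ih]; push_cast; ring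

variable {f g}

lemma deg_mono (h : ∀ v, f v ≤ g v) : f.deg ≤ g.deg :=
  finsum_le_finsum' f.hasFiniteSupport_log g.hasFiniteSupport_log
    fun v ↦ Real.log_le_log (f.pos v) (h v)

variable (f)

lemma deg_nonneg (h : ∀ v, 1 ≤ f v) : 0 ≤ f.deg :=
  finsum_nonneg fun v ↦ Real.log_nonneg (h v)

/-- The positive idele with given components. -/
def ofFun (f : Place → ℝ) (hpos : ∀ v, 0 < f v) (hfin : HasFiniteMulSupport f) : PosIdele :=
  ⟨fun v ↦ ⟨f v, hpos v⟩, hfin.subset fun _ hv h ↦ hv (Subtype.ext h)⟩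

/-- The principal idele `(|q|_v)_v`. -/
noncomputable def principal (q : ℚ) (hq : q ≠ 0) : PosIdele :=
  ofFun (fun v ↦ v.abs q) (fun v ↦ v.abs.pos hq) (Place.hasFiniteMulSupport_abs hq)

@[simp] lemma principal_apply {q : ℚ} (hq : q ≠ 0) : principal q hq v = v.abs q := rfl

@[simp] lemma deg_principal {q : ℚ} (hq : q ≠ 0) : (principal q hq).deg = 0 :=
  Place.finsum_log_abs_eq_zero hq

/-- The idele `(max |q|_v 1)_v`, whose degree is the logarithmic Weil height of `q`. -/
noncomputable def maxOne (q : ℚ) : PosIdele :=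
  ofFun (fun v ↦ max (v.abs q) 1) (fun _ ↦ lt_max_of_lt_right one_pos) (by
    rcases eq_or_ne q 0 with rfl | hq
    · simp [HasFiniteMulSupport]
    · exact (Place.hasFiniteMulSupport_abs hq).max hasFiniteMulSupport_fun_one)

lemma maxOne_apply (q : ℚ) : maxOne q v = max (v.abs q) 1 := rfl

lemma one_le_maxOne (q : ℚ) : 1 ≤ maxOne q v := le_max_right _ _

lemma abs_le_maxOne (q : ℚ) : v.abs q ≤ maxOne q v := le_max_left _ _

lemma deg_maxOne (q : ℚ) : (maxOne q).deg = Real.log (max q.num.natAbs q.den : ℕ) := by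
  have hsome : HasFiniteSupport fun v : FinitePlace ℚ ↦ Real.log (maxOne q (some v)) :=
    (maxOne q).hasFiniteSupport_log.comp_of_injective (Option.some_injective _)
  have hheight := logHeight₁_eq (K := ℚ) q
  rw [Rat.logHeight₁_eq_log_max, Fintype.sum_subsingleton _ Rat.infinitePlace] at hheight
  rw [hheight, deg, finsum_option hsome]
  congr 1
  · simp [maxOne_apply, Rat.infinitePlace_apply, InfinitePlace.mult, Rat.isReal_infinitePlace,
      Place.abs_none, Real.posLog_eq_log_max_one, max_comm]
  · refine finsum_congr fun v ↦ ?_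
    rw [Real.posLog_eq_log_max_one (by positivity), max_comm]
    rfl

/-- The idele with archimedean component `r` and all other components `1`. -/
noncomputable def atInfinity (r : ℝ) (hr : 0 < r) : PosIdele :=
  ofFun (fun v ↦ v.elim r fun _ ↦ 1) (fun v ↦ by cases v <;> simp [hr])
    (Place.hasFiniteMulSupport_of_some hasFiniteMulSupport_one)

variable {r : ℝ} {hr : 0 < r}

@[simp] lemma deg_atInfinity : (atInfinity r hr).deg = Real.log r := by
  rw [deg, finsum_eq_single _ none fun v hv ↦ ?_]
  · rfl
  · obtain ⟨v, rfl⟩ := Option.ne_none_iff_exists'.mp hv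
    exact Real.log_one

lemma one_le_atInfinity (h : 1 ≤ r) : 1 ≤ atInfinity r hr v := by
  cases v with
  | none => exact h
  | some v => exact le_rfl

lemma abs_intCast_le_atInfinity {k : ℤ} (hk : |(k : ℝ)| ≤ r) :
    v.abs (k : ℚ) ≤ atInfinity r hr v := by
  cases v with
  | none => simpa [Place.abs_none, atInfinity, ofFun, component] using hk
  | some v => exact (Place.isNonarchimedean_abs_some v).apply_intCast_le_one

lemma abs_add_le_atInfinity_mul_max (hr₂ : 2 ≤ r) (x y : ℚ) :
    v.abs (x + y) ≤ atInfinity r hr v * max (v.abs x) (v.abs y) := by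
  cases v with
  | none =>
    calc Place.abs none (x + y) ≤ Place.abs none x + Place.abs none y := (Place.abs none).add_le x y
      _ ≤ 2 * max (Place.abs none x) (Place.abs none y) := by
        linarith [le_max_left (Place.abs none x) (Place.abs none y),
          le_max_right (Place.abs none x) (Place.abs none y)]
      _ ≤ r * max (Place.abs none x) (Place.abs none y) := by
        gcongr
  | some v => exact (Place.isNonarchimedean_abs_some v x y).trans_eq (one_mul _).symm

end PosIdele

end Places

/-! ### Local estimates on a cubic `y² = x³ + ax + b` -/

section Local

variable {F : Type*} [Field F] {v : AbsoluteValue F ℝ} {τ w : ℝ} {a b : F}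

/-- The absolute value `v` is ultrametric, and bounded by `1` on the integers that occur as
coefficients below, up to a factor `τ`. -/
structure QuasiUltrametric (v : AbsoluteValue F ℝ) (τ : ℝ) : Prop where
  one_le : 1 ≤ τ
  add_le_mul_max : ∀ x y, v (x + y) ≤ τ * max (v x) (v y)
  natCast_le : ∀ n : ℕ, n ≤ 100 → v n ≤ τ

/-- The bound `v x ≤ τ ^ k * B`, in a form that can be propagated through polynomial
expressions. -/
def AbsLE (v : AbsoluteValue F ℝ) (τ : ℝ) (k : ℕ) (B : ℝ) (x : F) : Prop :=
  v x ≤ τ ^ k * B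

lemma absLE_zero {B : ℝ} {x : F} : AbsLE v τ 0 B x ↔ v x ≤ B := by
  rw [AbsLE, pow_zero, one_mul]

namespace QuasiUltrametric

variable (U : QuasiUltrametric v τ) {k l d e f : ℕ} {B B' M : ℝ} {x y z : F}
include U

lemma pos : 0 < τ := one_pos.trans_le U.one_le

lemma pow_mul_le_pow_mul (h : k ≤ l) (hB : 0 ≤ B) : τ ^ k * B ≤ τ ^ l * B :=
  mul_le_mul_of_nonneg_right (pow_le_pow_right₀ U.one_le h) hB

lemma le_pow_mul (k : ℕ) (hB : 0 ≤ B) : B ≤ τ ^ k * B :=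
  le_mul_of_one_le_left hB (one_le_pow₀ U.one_le)

lemma nonneg_of_absLE (h : AbsLE v τ k B x) : 0 ≤ B :=
  nonneg_of_mul_nonneg_right ((v.nonneg x).trans h) (pow_pos U.pos k)

lemma mono (h : AbsLE v τ k B x) (hk : k ≤ l) (hB : B ≤ B') : AbsLE v τ l B' x :=
  h.trans (mul_le_mul (pow_le_pow_right₀ U.one_le hk) hB (U.nonneg_of_absLE h)
    (pow_pos U.pos l).le)

lemma add (hx : AbsLE v τ k B x) (hy : AbsLE v τ l B y) : AbsLE v τ (max k l + 1) B (x + y) := by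
  have hmax : max (v x) (v y) ≤ τ ^ max k l * B :=
    max_le (U.mono hx (le_max_left k l) le_rfl) (U.mono hy (le_max_right k l) le_rfl)
  calc v (x + y) ≤ τ * max (v x) (v y) := U.add_le_mul_max x y
    _ ≤ τ * (τ ^ max k l * B) := mul_le_mul_of_nonneg_left hmax U.pos.le
    _ = τ ^ (max k l + 1) * B := by ring

omit U in
lemma neg (hx : AbsLE v τ k B x) : AbsLE v τ k B (-x) := by
  rwa [AbsLE, v.map_neg]

lemma sub (hx : AbsLE v τ k B x) (hy : AbsLE v τ l B y) : AbsLE v τ (max k l + 1) B (x - y) := by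
  rw [sub_eq_add_neg]
  exact U.add hx (neg hy)

omit U in
lemma mul (hx : AbsLE v τ k B x) (hy : AbsLE v τ l B' y) :
    AbsLE v τ (k + l) (B * B') (x * y) := by
  rw [AbsLE, v.map_mul]
  calc v x * v y ≤ (τ ^ k * B) * (τ ^ l * B') :=
        mul_le_mul hx hy (v.nonneg _) ((v.nonneg x).trans hx)
    _ = τ ^ (k + l) * (B * B') := by ring

omit U in
lemma mul_of_pow (hx : AbsLE v τ k (M ^ d) x) (hy : AbsLE v τ l (M ^ e) y)
    (hf : d + e = f := by rfl) : AbsLE v τ (k + l) (M ^ f) (x * y) := by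
  rw [← hf, pow_add]
  exact mul hx hy

lemma ofNat_mul (n : ℕ) [n.AtLeastTwo] (hx : AbsLE v τ k B x)
    (hn : n ≤ 100 := by norm_num) : AbsLE v τ (k + 1) B (OfNat.ofNat n * x) := by
  have hcast : AbsLE v τ 1 1 ((n : ℕ) : F) := by simpa [AbsLE] using U.natCast_le n hn
  have hmul := mul hcast hx
  rw [one_mul, add_comm] at hmul
  rwa [show (OfNat.ofNat n : F) = ((n : ℕ) : F) from Nat.cast_ofNat.symm]

omit U in
lemma pow (hx : AbsLE v τ k (M ^ d) x) (n : ℕ) (hf : d * n = f := by rfl) :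
    AbsLE v τ (k * n) (M ^ f) (x ^ n) := by
  rw [AbsLE, v.map_pow, ← hf, pow_mul, pow_mul, ← mul_pow]
  exact pow_le_pow_left₀ (v.nonneg x) hx n

lemma of_sq (hM : 0 ≤ M) (h : AbsLE v τ (k * 2) (M ^ (d * 2)) (x ^ 2)) :
    AbsLE v τ k (M ^ d) x := by
  rw [AbsLE, v.map_pow, pow_mul, pow_mul, ← mul_pow] at h
  exact le_of_sq_le_sq h (mul_nonneg (pow_pos U.pos k).le (pow_nonneg hM d))

lemma le_mul_of_dominant (hxyz : x = y + z) (hz : AbsLE v τ k B z)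
    (hB : τ ^ (k + 1) * B < v x) : v x ≤ τ * v y := by
  have hadd := U.add_le_mul_max y z
  rw [← hxyz] at hadd
  rcases le_total (v z) (v y) with hzy | hyz
  · rwa [max_eq_left hzy] at hadd
  · rw [max_eq_right hyz] at hadd
    refine absurd (hadd.trans (mul_le_mul_of_nonneg_left hz U.pos.le)) (not_le.mpr ?_)
    rwa [← mul_assoc, ← pow_succ']

end QuasiUltrametric

/-- The local size `max(√|x|, w)` of an `x`-coordinate `x`, at scale `w`. -/
noncomputable def localSize (v : AbsoluteValue F ℝ) (w : ℝ) (x : F) : ℝ :=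
  max √(v x) w

lemma le_localSize (v : AbsoluteValue F ℝ) (w : ℝ) (x : F) : w ≤ localSize v w x :=
  le_max_right _ _

lemma abs_le_localSize_sq (v : AbsoluteValue F ℝ) (w : ℝ) (x : F) :
    v x ≤ localSize v w x ^ 2 :=
  (Real.sqrt_le_left ((Real.sqrt_nonneg _).trans (le_max_left _ _))).mp (le_max_left _ _)

lemma localSize_le {R : ℝ} {x : F} (hw : 0 ≤ w) (hwR : w ≤ R) (hx : v x ≤ R ^ 2) :
    localSize v w x ≤ R :=
  max_le (Real.sqrt_le_iff.mpr ⟨hw.trans hwR, hx⟩) hwR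

lemma localSize_sq_mul_le {x : F} {s B : ℝ} (hx : v x * s ≤ B) (hw : w ^ 2 * s ≤ B) :
    localSize v w x ^ 2 * s ≤ B := by
  rcases max_cases √(v x) w with h | h <;> rw [localSize, h.1]
  · rwa [Real.sq_sqrt (v.nonneg x)]
  · exact hw

lemma localSize_sq_eq {x : F} (h : w ^ 2 ≤ v x) : localSize v w x ^ 2 = v x := by
  rw [localSize, max_eq_left (Real.le_sqrt_of_sq_le h), Real.sq_sqrt (v.nonneg x)]

/-- The point `(x, y)` lies on the cubic `y² = x³ + ax + b`. -/
abbrev OnCubic (a b x y : F) : Prop := y ^ 2 = x ^ 3 + a * x + b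

/-- `x₃` is the `x`-coordinate of the third point of a cubic on the chord through `(x, y)` and
`(q, r)`. It carries no information when `x = q`. -/
def IsChordX (x y q r x₃ : F) : Prop :=
  x ≠ q → x₃ * (x - q) ^ 2 = (y - r) ^ 2 - (x + q) * (x - q) ^ 2

/-- The numerator of the duplication formula on `y² = x³ + ax + b`. -/
def dblNum (a b x : F) : F := x ^ 4 - 2 * (a * x ^ 2) - 8 * (b * x) + a ^ 2

/-- Bounds at one place on the coefficients of `y² = x³ + ax + b` in terms of the scale `w` at
which the discriminant has size `w ^ 12`. -/
structure LocalScale (v : AbsoluteValue F ℝ) (τ w : ℝ) (a b : F) : Prop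
    extends QuasiUltrametric v τ where
  scale_pos : 0 < w
  one_le_mul_four : 1 ≤ τ * v 4
  coeff_a_le : v a ≤ τ * w ^ 4
  coeff_b_le : v b ≤ τ * w ^ 6
  disc_eq : v (4 * a ^ 3 + 27 * b ^ 2) = w ^ 12

namespace LocalScale

open QuasiUltrametric (neg mul mul_of_pow pow)

variable (L : LocalScale v τ w a b) {M : ℝ} {x y : F}
include L

lemma localSize_pos (x : F) : 0 < localSize v w x :=
  L.scale_pos.trans_le (le_localSize v w x)

omit L in
lemma scale_le (hM : localSize v w x ≤ M) : w ≤ M := (le_localSize v w x).trans hM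

lemma absLE_x (hM : localSize v w x ≤ M) : AbsLE v τ 0 (M ^ 2) x :=
  absLE_zero.mpr ((abs_le_localSize_sq v w x).trans
    (pow_le_pow_left₀ (L.localSize_pos x).le hM 2))

lemma absLE_a (hM : w ≤ M) : AbsLE v τ 1 (M ^ 4) a :=
  L.mono (k := 1) (by simpa [AbsLE] using L.coeff_a_le) le_rfl
    (pow_le_pow_left₀ L.scale_pos.le hM 4)

lemma absLE_b (hM : w ≤ M) : AbsLE v τ 1 (M ^ 6) b :=
  L.mono (k := 1) (by simpa [AbsLE] using L.coeff_b_le) le_rfl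
    (pow_le_pow_left₀ L.scale_pos.le hM 6)

lemma absLE_y (h : OnCubic a b x y) (hM : localSize v w x ≤ M) : AbsLE v τ 3 (M ^ 3) y := by
  have hw := scale_le hM
  have hx := L.absLE_x hM
  refine L.of_sq (L.scale_pos.le.trans hw) ?_
  rw [h]
  exact L.mono (L.add (L.add (pow hx 3) (mul_of_pow (L.absLE_a hw) hx)) (L.absLE_b hw))
    (by norm_num) le_rfl

lemma localSize_sq_mul_sub_sq_le {x' y' x₃ : F} (h : OnCubic a b x y) (h' : OnCubic a b x' y')
    (hM : localSize v w x ≤ M) (hM' : localSize v w x' ≤ M) (hne : x ≠ x')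
    (h₃ : IsChordX x y x' y' x₃) :
    localSize v w x₃ ^ 2 * v (x - x') ^ 2 ≤ τ ^ 40 * M ^ 6 := by
  have hw := scale_le hM
  have hx := L.absLE_x hM
  have hx' := L.absLE_x hM'
  have hchord : x₃ * (x - x') ^ 2 = (x + x') * (x * x' + a) + 2 * b - 2 * (y * y') := by
    rw [h₃ hne]
    linear_combination h + h'
  refine localSize_sq_mul_le ?_ ?_
  · rw [← v.map_pow, ← v.map_mul, hchord]
    exact L.mono (L.sub (L.add (mul_of_pow (L.add hx hx') (L.add (mul_of_pow hx hx')
      (L.absLE_a hw))) (L.ofNat_mul 2 (L.absLE_b hw)))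
      (L.ofNat_mul 2 (mul_of_pow (L.absLE_y h hM) (L.absLE_y h' hM')))) (by norm_num) le_rfl
  · have hsub : v (x - x') ^ 2 ≤ τ ^ 40 * M ^ 4 := by
      rw [← v.map_pow]
      exact L.mono (pow (L.sub hx hx') 2) (by norm_num) le_rfl
    calc w ^ 2 * v (x - x') ^ 2 ≤ M ^ 2 * (τ ^ 40 * M ^ 4) :=
          mul_le_mul (pow_le_pow_left₀ L.scale_pos.le hw 2) hsub (by positivity) (by positivity)
      _ = τ ^ 40 * M ^ 6 := by ring

lemma localSize_dbl_le {x₂ : F} (h : OnCubic a b x y) (h₂ : x₂ * (4 * y ^ 2) = dblNum a b x) :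
    localSize v w x₂ ^ 2 * v (4 * y ^ 2) ≤ τ ^ 40 * localSize v w x ^ 8 := by
  have hw := le_localSize v w x
  have hx := L.absLE_x (le_refl (localSize v w x))
  have hpos := L.localSize_pos x
  refine localSize_sq_mul_le ?_ ?_
  · rw [← v.map_mul, h₂, dblNum]
    exact L.mono (L.add (L.sub (L.sub (pow hx 4)
      (L.ofNat_mul 2 (mul_of_pow (L.absLE_a hw) (pow hx 2))))
      (L.ofNat_mul 8 (mul_of_pow (L.absLE_b hw) hx))) (pow (L.absLE_a hw) 2))
      (by norm_num) le_rfl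
  · have hy : v (4 * y ^ 2) ≤ τ ^ 40 * localSize v w x ^ 6 :=
      L.mono (L.ofNat_mul 4 (pow (L.absLE_y h le_rfl) 2)) (by norm_num) le_rfl
    calc w ^ 2 * v (4 * y ^ 2) ≤ localSize v w x ^ 2 * (τ ^ 40 * localSize v w x ^ 6) :=
          mul_le_mul (pow_le_pow_left₀ L.scale_pos.le hw 2) hy (v.nonneg _) (by positivity)
      _ = τ ^ 40 * localSize v w x ^ 8 := by ring

lemma sq_le_of_large {k : ℕ} (hl : τ ^ k * M ^ 2 < v x) : M ^ 2 ≤ v x :=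
  (L.le_pow_mul k (sq_nonneg M)).trans hl.le

lemma localSize_sq_eq_of_large (hwM : w ≤ M) {k : ℕ} (hl : τ ^ k * M ^ 2 < v x) :
    localSize v w x ^ 2 = v x :=
  localSize_sq_eq ((pow_le_pow_left₀ L.scale_pos.le hwM 2).trans (L.sq_le_of_large hl))

lemma abs_pow_three_le_of_large (hwM : w ≤ M) (h : OnCubic a b x y)
    (hl : τ ^ 10 * M ^ 2 < v x) : v x ^ 3 ≤ τ * v y ^ 2 := by
  have hM : 0 < M := L.scale_pos.trans_le hwM
  have hMx := L.sq_le_of_large hl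
  have hxpos : 0 < v x := (by positivity : 0 < M ^ 2).trans_le hMx
  have hsplit : x ^ 3 = y ^ 2 + (-(a * x) - b) := by
    rw [h]
    ring
  rw [← v.map_pow, ← v.map_pow]
  refine L.le_mul_of_dominant (k := 9) (B := M ^ 2 * v x ^ 2) hsplit ?_ ?_
  · refine L.mono (L.sub (neg (L.mono (mul (L.absLE_a hwM) (absLE_zero.mpr le_rfl)) le_rfl ?_))
      (L.mono (L.absLE_b hwM) le_rfl ?_)) (by norm_num) le_rfl
    · calc M ^ 4 * v x = M ^ 2 * (M ^ 2 * v x) := by ring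
        _ ≤ M ^ 2 * (v x * v x) := by gcongr
        _ = M ^ 2 * v x ^ 2 := by ring
    · calc M ^ 6 = M ^ 2 * (M ^ 2) ^ 2 := by ring
        _ ≤ M ^ 2 * v x ^ 2 := by gcongr
  · rw [v.map_pow]
    calc τ ^ (9 + 1) * (M ^ 2 * v x ^ 2) = (τ ^ 10 * M ^ 2) * v x ^ 2 := by ring
      _ < v x * v x ^ 2 := by gcongr
      _ = v x ^ 3 := by ring

lemma abs_pow_four_le_of_large (hl : τ ^ 20 * w ^ 2 < v x) :
    v x ^ 4 ≤ τ * v (dblNum a b x) := by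
  have hw := L.scale_pos
  have hwx := L.sq_le_of_large hl
  have hxpos : 0 < v x := (by positivity : 0 < w ^ 2).trans_le hwx
  have hsplit : x ^ 4 = dblNum a b x + (2 * (a * x ^ 2) + 8 * (b * x) - a ^ 2) := by
    rw [dblNum]
    ring
  have hself : ∀ n : ℕ, AbsLE v τ 0 (v x ^ n) (x ^ n) := fun n ↦
    absLE_zero.mpr (v.map_pow x n).le
  rw [← v.map_pow]
  refine L.le_mul_of_dominant (k := 19) (B := w ^ 2 * v x ^ 3) hsplit ?_ ?_
  · refine L.mono (L.sub (L.add (L.ofNat_mul 2 (L.mono (mul (L.absLE_a le_rfl) (hself 2))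
      le_rfl ?_)) (L.ofNat_mul 8 (L.mono (mul (L.absLE_b le_rfl) (absLE_zero.mpr le_rfl))
      le_rfl ?_))) (L.mono (pow (L.absLE_a le_rfl) 2) le_rfl ?_)) (by norm_num) le_rfl
    · calc w ^ 4 * v x ^ 2 = w ^ 2 * (w ^ 2 * v x ^ 2) := by ring
        _ ≤ w ^ 2 * (v x * v x ^ 2) := by gcongr
        _ = w ^ 2 * v x ^ 3 := by ring
    · calc w ^ 6 * v x = w ^ 2 * ((w ^ 2) ^ 2 * v x) := by ring
        _ ≤ w ^ 2 * (v x ^ 2 * v x) := by gcongr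
        _ = w ^ 2 * v x ^ 3 := by ring
    · calc w ^ (4 * 2) = w ^ 2 * (w ^ 2) ^ 3 := by ring
        _ ≤ w ^ 2 * v x ^ 3 := by gcongr
  · rw [v.map_pow]
    calc τ ^ (19 + 1) * (w ^ 2 * v x ^ 3) = (τ ^ 20 * w ^ 2) * v x ^ 3 := by ring
      _ < v x * v x ^ 3 := by gcongr
      _ = v x ^ 4 := by ring

lemma localSize_le_pow_mul (hwM : w ≤ M) {k : ℕ} (h : v x ≤ τ ^ (k * 2) * M ^ 2) :
    localSize v w x ≤ τ ^ k * M :=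
  localSize_le L.scale_pos.le (hwM.trans (L.le_pow_mul k (L.scale_pos.le.trans hwM)))
    (by rwa [mul_pow, ← pow_mul])

lemma localSize_le_of_onCubic_zero (h : OnCubic a b x 0) : localSize v w x ≤ τ ^ 5 * w := by
  refine L.localSize_le_pow_mul le_rfl (not_lt.mp fun hl ↦ ?_)
  have hcube := L.abs_pow_three_le_of_large le_rfl h hl
  have hxpos : 0 < v x :=
    (pow_pos L.scale_pos 2).trans_le (L.sq_le_of_large hl)
  rw [v.map_zero, zero_pow two_ne_zero, mul_zero] at hcube
  exact absurd hcube (not_le.mpr (pow_pos hxpos 3))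

/-- The discriminant is a combination of `dblNum a b x` and `y ^ 2` with coefficients polynomial
in `x`, so the two cannot be small together. -/
lemma scale_pow_eight_le_of_small {x₂ : F} (h : OnCubic a b x y)
    (h₂ : x₂ * (4 * y ^ 2) = dblNum a b x) (hl : v x ≤ τ ^ 20 * w ^ 2) :
    w ^ 8 ≤ τ ^ 65 * (localSize v w x₂ ^ 2 * v (4 * y ^ 2)) := by
  have hw := L.scale_pos
  have hτ := L.pos
  have hx : AbsLE v τ 20 (w ^ 2) x := hl
  set G := localSize v w x₂ ^ 2 * v (4 * y ^ 2) with hG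
  have hdbl : AbsLE v τ 0 G (dblNum a b x) := absLE_zero.mpr <| by
    rw [← h₂, v.map_mul]
    exact mul_le_mul_of_nonneg_right (abs_le_localSize_sq v w x₂) (v.nonneg _)
  have hysq : AbsLE v τ 1 (G / w ^ 2) (y ^ 2) := by
    rw [AbsLE, pow_one, ← mul_div_assoc, le_div_iff₀ (by positivity)]
    have hfour : v (y ^ 2) ≤ τ * v (4 * y ^ 2) := by
      rw [v.map_mul, ← mul_assoc]
      exact le_mul_of_one_le_left (v.nonneg _) L.one_le_mul_four
    calc v (y ^ 2) * w ^ 2 ≤ (τ * v (4 * y ^ 2)) * localSize v w x₂ ^ 2 := by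
          have := le_localSize v w x₂
          gcongr
      _ = τ * G := by rw [hG]; ring
  have hdisc : 4 * a ^ 3 + 27 * b ^ 2 = (3 * x ^ 2 + 4 * a) * dblNum a b x
      - (3 * x ^ 3 - 5 * (a * x) - 27 * b) * y ^ 2 := by
    rw [h, dblNum]
    ring
  have hleft : AbsLE v τ 42 (w ^ 4 * G) ((3 * x ^ 2 + 4 * a) * dblNum a b x) :=
    mul (L.add (L.ofNat_mul 3 (pow hx 2)) (L.ofNat_mul 4 (L.absLE_a le_rfl))) hdbl
  have hright : AbsLE v τ 64 (w ^ 6 * (G / w ^ 2)) ((3 * x ^ 3 - 5 * (a * x) - 27 * b) * y ^ 2) :=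
    mul (L.sub (L.sub (L.ofNat_mul 3 (pow hx 3)) (L.ofNat_mul 5 (mul_of_pow (L.absLE_a le_rfl) hx)))
      (L.ofNat_mul 27 (L.absLE_b le_rfl))) hysq
  have hsum : v (4 * a ^ 3 + 27 * b ^ 2) ≤ τ ^ 65 * (w ^ 4 * G) := by
    rw [hdisc]
    refine L.mono (L.sub hleft (L.mono hright le_rfl ?_))
      (by norm_num) le_rfl
    rw [show w ^ 6 * (G / w ^ 2) = w ^ 4 * G by field_simp]
  rw [L.disc_eq] at hsum
  refine le_of_mul_le_mul_left ?_ (pow_pos hw 4)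
  calc w ^ 4 * w ^ 8 = w ^ 12 := by ring
    _ ≤ τ ^ 65 * (w ^ 4 * G) := hsum
    _ = w ^ 4 * (τ ^ 65 * G) := by ring

lemma le_localSize_dbl {x₂ : F} (h : OnCubic a b x y) (h₂ : x₂ * (4 * y ^ 2) = dblNum a b x) :
    localSize v w x ^ 8 ≤ τ ^ 200 * (localSize v w x₂ ^ 2 * v (4 * y ^ 2)) := by
  have hτ := L.pos
  have hpos := L.localSize_pos x
  have hG : 0 ≤ localSize v w x₂ ^ 2 * v (4 * y ^ 2) :=
    mul_nonneg (sq_nonneg _) (v.nonneg _)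
  rcases lt_or_ge (τ ^ 20 * w ^ 2) (v x) with hl | hl
  · calc localSize v w x ^ 8 = v x ^ 4 := by
          rw [← L.localSize_sq_eq_of_large le_rfl hl, ← pow_mul]
      _ ≤ τ * v (x₂ * (4 * y ^ 2)) := h₂ ▸ L.abs_pow_four_le_of_large hl
      _ ≤ τ ^ 1 * (localSize v w x₂ ^ 2 * v (4 * y ^ 2)) := by
          rw [v.map_mul, pow_one]
          gcongr
          exact abs_le_localSize_sq v w x₂
      _ ≤ _ := L.pow_mul_le_pow_mul (by norm_num) hG
  · calc localSize v w x ^ 8 ≤ (τ ^ 10 * w) ^ 8 := by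
          gcongr
          exact L.localSize_le_pow_mul le_rfl hl
      _ = τ ^ 80 * w ^ 8 := by ring
      _ ≤ τ ^ 80 * (τ ^ 65 * (localSize v w x₂ ^ 2 * v (4 * y ^ 2))) := by
          gcongr
          exact L.scale_pow_eight_le_of_small h h₂ hl
      _ = τ ^ 145 * (localSize v w x₂ ^ 2 * v (4 * y ^ 2)) := by ring
      _ ≤ _ := L.pow_mul_le_pow_mul (by norm_num) hG

section Chord

variable {q r x₃ : F}

lemma absLE_chord_sub_mul_sq (h : OnCubic a b x y) (h' : OnCubic a b q r)
    (hM : localSize v w q ≤ M) (hle : M ≤ localSize v w x) (hne : x ≠ q)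
    (h₃ : IsChordX x y q r x₃) :
    AbsLE v τ 30 (localSize v w x ^ 3 * M ^ 3) ((x₃ - q) * (x - q) ^ 2) := by
  have hwM := scale_le hM
  have hM0 : 0 < M := L.scale_pos.trans_le hwM
  have hq := L.absLE_x hM
  set m := localSize v w x
  have hx := L.absLE_x (le_refl m)
  have hchord : (x₃ - q) * (x - q) ^ 2
      = 3 * (x * q ^ 2) + a * x + a * q + 2 * b - q ^ 3 - 2 * (y * r) := by
    linear_combination h₃ hne + h + h'
  have hM6 : M ^ 6 ≤ m ^ 3 * M ^ 3 := by
    calc M ^ 6 = M ^ 3 * M ^ 3 := by ring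
      _ ≤ m ^ 3 * M ^ 3 := by gcongr
  have hM4 : m ^ 2 * M ^ 4 ≤ m ^ 3 * M ^ 3 := by
    calc m ^ 2 * M ^ 4 = m ^ 2 * M * M ^ 3 := by ring
      _ ≤ m ^ 2 * m * M ^ 3 := by gcongr
      _ = m ^ 3 * M ^ 3 := by ring
  rw [hchord]
  exact L.mono (L.sub (L.sub (L.add (L.add (L.add
    (L.ofNat_mul 3 (L.mono (mul hx (pow hq 2)) le_rfl hM4))
    (L.mono (mul (L.absLE_a hwM) hx) le_rfl (by rwa [mul_comm])))
    (L.mono (mul_of_pow (L.absLE_a hwM) hq) le_rfl hM6))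
    (L.mono (L.ofNat_mul 2 (L.absLE_b hwM)) le_rfl hM6))
    (L.mono (pow hq 3) le_rfl hM6))
    (L.ofNat_mul 2 (mul (L.absLE_y h le_rfl) (L.absLE_y h' hM)))) (by norm_num) le_rfl

lemma le_localSize_of_large {k : ℕ} (hl : τ ^ k * M ^ 2 < v x) : M ≤ localSize v w x :=
  (Real.le_sqrt_of_sq_le (L.sq_le_of_large hl)).trans (le_max_left _ _)

lemma abs_le_mul_sub_of_large (hM : localSize v w q ≤ M) (hl : τ ^ 10 * M ^ 2 < v x) :
    v x ≤ τ * v (x - q) := by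
  refine L.le_mul_of_dominant (sub_add_cancel x q).symm (L.absLE_x hM) (hl.trans_le' ?_)
  exact L.pow_mul_le_pow_mul (by norm_num) (sq_nonneg M)

/-- As `(x, y)` tends to the origin of the group law, the sum tends to `(q, r)`. -/
lemma chord_sub_mul_localSize_le_of_large (h : OnCubic a b x y) (h' : OnCubic a b q r)
    (hM : localSize v w q ≤ M) (hl : τ ^ 10 * M ^ 2 < v x) (h₃ : IsChordX x y q r x₃) :
    v (x₃ - q) * localSize v w x ≤ τ ^ 32 * M ^ 3 := by
  have hM0 : 0 < M := L.scale_pos.trans_le (scale_le hM)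
  have hxpos : 0 < v x := (by positivity : 0 < M ^ 2).trans_le (L.sq_le_of_large hl)
  have hxq := L.abs_le_mul_sub_of_large hM hl
  have hne : x ≠ q := by
    rintro rfl
    rw [sub_self, v.map_zero, mul_zero] at hxq
    exact hxq.not_gt hxpos
  have hτ := L.pos
  have hmul := L.absLE_chord_sub_mul_sq h h' hM (L.le_localSize_of_large hl) hne h₃
  rw [AbsLE, v.map_mul, v.map_pow] at hmul
  have hsq := L.localSize_sq_eq_of_large (scale_le hM) hl
  have hpos := L.localSize_pos x
  set m := localSize v w x
  refine le_of_mul_le_mul_left ?_ (pow_pos hpos 3)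
  calc m ^ 3 * (v (x₃ - q) * m) = v (x₃ - q) * (m ^ 2) ^ 2 := by ring
    _ ≤ v (x₃ - q) * (τ * v (x - q)) ^ 2 := by rw [hsq]; gcongr
    _ = τ ^ 2 * (v (x₃ - q) * v (x - q) ^ 2) := by ring
    _ ≤ τ ^ 2 * (τ ^ 30 * (m ^ 3 * M ^ 3)) := by gcongr
    _ = m ^ 3 * (τ ^ 32 * M ^ 3) := by ring

lemma localSize_chord_le_of_large (h : OnCubic a b x y) (h' : OnCubic a b q r)
    (hM : localSize v w q ≤ M) (hl : τ ^ 10 * M ^ 2 < v x) (h₃ : IsChordX x y q r x₃) :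
    localSize v w x₃ ≤ τ ^ 21 * M := by
  have hwM := scale_le hM
  have hM0 : 0 < M := L.scale_pos.trans_le hwM
  have hsub : AbsLE v τ 32 (M ^ 2) (x₃ - q) := by
    refine le_of_mul_le_mul_left ?_ hM0
    calc M * v (x₃ - q) ≤ localSize v w x * v (x₃ - q) :=
          mul_le_mul_of_nonneg_right (L.le_localSize_of_large hl) (v.nonneg _)
      _ = v (x₃ - q) * localSize v w x := mul_comm _ _
      _ ≤ τ ^ 32 * M ^ 3 := L.chord_sub_mul_localSize_le_of_large h h' hM hl h₃
      _ = M * (τ ^ 32 * M ^ 2) := by ring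
  refine L.localSize_le_pow_mul hwM ?_
  have hadd := L.mono (l := 21 * 2) (L.add hsub (L.absLE_x hM)) (by norm_num) le_rfl
  rwa [sub_add_cancel] at hadd

end Chord

variable {n : ℝ}

lemma localSize_sq_mul_le_of_linear {x₁ x₂ d d₁ d₂ : F} (hM₁ : localSize v w x₁ ≤ M)
    (hM₂ : localSize v w x₂ ≤ M) (hlin : x * d = d₁ * x₁ - d₂ * x₂) (hd : v d ≤ n)
    (hd₁ : v d₁ ≤ n) (hd₂ : v d₂ ≤ n) : localSize v w x ^ 2 * v d ≤ τ * (n * M ^ 2) := by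
  have hw := L.scale_pos
  have hwM := scale_le hM₁
  have hn : 0 ≤ n := (v.nonneg d).trans hd
  refine localSize_sq_mul_le ?_ ?_
  · rw [← v.map_mul, hlin, ← pow_one τ]
    exact L.sub (mul (absLE_zero.mpr hd₁) (L.absLE_x hM₁))
      (mul (absLE_zero.mpr hd₂) (L.absLE_x hM₂))
  · calc w ^ 2 * v d ≤ M ^ 2 * n := by gcongr
      _ = n * M ^ 2 := mul_comm _ _
      _ ≤ τ * (n * M ^ 2) := le_mul_of_one_le_left (by positivity) L.one_le

lemma localSize_sq_mul_le_of_linear_chord {q₁ r₁ q₂ r₂ x₁ x₂ d d₁ d₂ : F}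
    (h : OnCubic a b x y) (h₁ : OnCubic a b q₁ r₁) (h₂ : OnCubic a b q₂ r₂)
    (hM₁ : localSize v w q₁ ≤ M) (hM₂ : localSize v w q₂ ≤ M)
    (hx₁ : IsChordX x y q₁ r₁ x₁) (hx₂ : IsChordX x y q₂ r₂ x₂)
    (hlin : x * d = d₁ * x₁ - d₂ * x₂) (hd : v d ≤ n) (hd₁ : v d₁ ≤ n) (hd₂ : v d₂ ≤ n) :
    localSize v w x ^ 2 * v d ≤ τ ^ 50 * (n * M ^ 2) := by
  have hwM := scale_le hM₁
  have hM : 0 < M := L.scale_pos.trans_le hwM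
  have hτ := L.pos
  have hn : 0 ≤ n := (v.nonneg d).trans hd
  have hpos := L.localSize_pos x
  rcases lt_or_ge (τ ^ 10 * M ^ 2) (v x) with hl | hl
  · calc localSize v w x ^ 2 * v d ≤ τ * (n * (τ ^ 21 * M) ^ 2) :=
          L.localSize_sq_mul_le_of_linear (L.localSize_chord_le_of_large h h₁ hM₁ hl hx₁)
            (L.localSize_chord_le_of_large h h₂ hM₂ hl hx₂) hlin hd hd₁ hd₂
      _ = τ ^ 43 * (n * M ^ 2) := by ring
      _ ≤ τ ^ 50 * (n * M ^ 2) := L.pow_mul_le_pow_mul (by norm_num) (by positivity)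
  · calc localSize v w x ^ 2 * v d ≤ (τ ^ 5 * M) ^ 2 * n := by
          gcongr
          exact L.localSize_le_pow_mul hwM hl
      _ = τ ^ 10 * (n * M ^ 2) := by ring
      _ ≤ τ ^ 50 * (n * M ^ 2) := L.pow_mul_le_pow_mul (by norm_num) (by positivity)

end LocalScale

/-- The determinant of the matrix with rows `(x i, m i, 1)`, which vanishes when the three points
`(x i, m i)` of the plane are collinear. -/
def affineDet (x m : Fin 3 → F) : F :=
  x 0 * (m 1 - m 2) + x 1 * (m 2 - m 0) + x 2 * (m 0 - m 1)

namespace LocalScale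

open QuasiUltrametric (mul)

variable (L : LocalScale v τ w a b) {M n : ℝ} {x y l ν : F} {xs ys qs rs m : Fin 3 → F}
include L

lemma absLE_affineDet {k : ℕ} {B : ℝ} (hx : ∀ i, AbsLE v τ k B (xs i)) (hm : ∀ i, v (m i) ≤ n) :
    AbsLE v τ (k + 3) (n * B) (affineDet xs m) := by
  have hm : ∀ i, AbsLE v τ 0 n (m i) := fun i ↦ absLE_zero.mpr (hm i)
  exact L.mono (L.add (L.add (mul (hx 0) (L.sub (hm 1) (hm 2)))
    (mul (hx 1) (L.sub (hm 2) (hm 0)))) (mul (hx 2) (L.sub (hm 0) (hm 1))))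
    (by omega) (mul_comm _ _).le

lemma localSize_mul_affineDet_le_of_small (hM : ∀ i, localSize v w (qs i) ≤ M)
    (hm : ∀ i, v (m i) ≤ n) (hl : v x ≤ τ ^ 10 * M ^ 2) :
    localSize v w x * v (affineDet qs m) ≤ τ ^ 8 * (n * M ^ 3) := by
  have hM0 : 0 < M := L.scale_pos.trans_le (scale_le (hM 0))
  have hτ := L.pos
  calc localSize v w x * v (affineDet qs m)
      ≤ (τ ^ 5 * M) * (τ ^ (0 + 3) * (n * M ^ 2)) :=
        mul_le_mul (L.localSize_le_pow_mul (scale_le (hM 0)) hl)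
          (L.absLE_affineDet (fun i ↦ L.absLE_x (hM i)) hm) (v.nonneg _) (by positivity)
    _ = τ ^ 8 * (n * M ^ 3) := by ring

lemma localSize_pow_three_le_of_large (hwM : w ≤ M) (h : OnCubic a b x y)
    (hl : τ ^ 10 * M ^ 2 < v x) : localSize v w x ^ 3 ≤ τ * v y := by
  refine le_of_sq_le_sq ?_ (mul_nonneg L.pos.le (v.nonneg y))
  calc (localSize v w x ^ 3) ^ 2 = v x ^ 3 := by
        rw [← L.localSize_sq_eq_of_large hwM hl]
        ring
    _ ≤ τ * v y ^ 2 := L.abs_pow_three_le_of_large hwM h hl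
    _ ≤ τ ^ 2 * v y ^ 2 :=
        mul_le_mul_of_nonneg_right (le_self_pow₀ L.one_le two_ne_zero) (sq_nonneg _)
    _ = (τ * v y) ^ 2 := by ring

lemma absLE_mul_affineDet_of_affine (hle : M ≤ localSize v w x)
    (hys : ∀ i, OnCubic a b (xs i) (ys i)) (hM : ∀ i, localSize v w (xs i) ≤ M)
    (haff : ∀ i, ys i = y + l * (xs i - x) + ν * m i) (hm : ∀ i, v (m i) ≤ n) :
    AbsLE v τ 45 (localSize v w x ^ 2 * (n * M ^ 3)) (y * affineDet xs m) := by
  have hM0 : 0 < M := L.scale_pos.trans_le (scale_le (hM 0))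
  have hn : 0 ≤ n := (v.nonneg _).trans (hm 0)
  have hdet : y * affineDet xs m = x * affineDet ys m + (xs 0 * (ys 2 * m 1 - ys 1 * m 2)
      + xs 1 * (ys 0 * m 2 - ys 2 * m 0) + xs 2 * (ys 1 * m 0 - ys 0 * m 1)) := by
    rw [affineDet, affineDet, haff 0, haff 1, haff 2]
    ring
  have hX : ∀ i, AbsLE v τ 0 (M ^ 2) (xs i) := fun i ↦ L.absLE_x (hM i)
  have hY : ∀ i, AbsLE v τ 3 (M ^ 3) (ys i) := fun i ↦ L.absLE_y (hys i) (hM i)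
  have hYm : ∀ i j, AbsLE v τ 3 (M ^ 3 * n) (ys i * m j) := fun i j ↦
    mul (hY i) (absLE_zero.mpr (hm j))
  have hfirst := mul (L.absLE_x (le_refl (localSize v w x))) (L.absLE_affineDet hY hm)
  have hrest := L.add (L.add (mul (hX 0) (L.sub (hYm 2 1) (hYm 1 2)))
    (mul (hX 1) (L.sub (hYm 0 2) (hYm 2 0)))) (mul (hX 2) (L.sub (hYm 1 0) (hYm 0 1)))
  rw [hdet]
  refine L.mono (L.add hfirst (L.mono hrest le_rfl ?_)) (by norm_num) le_rfl
  calc M ^ 2 * (M ^ 3 * n) = M ^ 2 * (n * M ^ 3) := by ring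
    _ ≤ localSize v w x ^ 2 * (n * M ^ 3) := by gcongr

lemma localSize_mul_affineDet_le (h : OnCubic a b x y) (hys : ∀ i, OnCubic a b (xs i) (ys i))
    (hM : ∀ i, localSize v w (xs i) ≤ M)
    (haff : ∀ i, ys i = y + l * (xs i - x) + ν * m i) (hm : ∀ i, v (m i) ≤ n) :
    localSize v w x * v (affineDet xs m) ≤ τ ^ 50 * (n * M ^ 3) := by
  have hM0 : 0 < M := L.scale_pos.trans_le (scale_le (hM 0))
  have hτ := L.pos
  have hn : 0 ≤ n := (v.nonneg _).trans (hm 0)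
  rcases lt_or_ge (τ ^ 10 * M ^ 2) (v x) with hl | hl
  · have hdet := L.absLE_mul_affineDet_of_affine (L.le_localSize_of_large hl) hys hM haff hm
    rw [AbsLE, v.map_mul] at hdet
    have hcube := L.localSize_pow_three_le_of_large (scale_le (hM 0)) h hl
    have hpos := L.localSize_pos x
    set s := localSize v w x
    refine le_of_mul_le_mul_left ?_ (pow_pos hpos 2)
    calc s ^ 2 * (s * v (affineDet xs m)) = s ^ 3 * v (affineDet xs m) := by ring
      _ ≤ (τ * v y) * v (affineDet xs m) := by gcongr
      _ = τ * (v y * v (affineDet xs m)) := by ring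
      _ ≤ τ * (τ ^ 45 * (s ^ 2 * (n * M ^ 3))) := by gcongr
      _ = s ^ 2 * (τ ^ 46 * (n * M ^ 3)) := by ring
      _ ≤ s ^ 2 * (τ ^ 50 * (n * M ^ 3)) := by
          gcongr s ^ 2 * ?_
          exact L.pow_mul_le_pow_mul (by norm_num) (by positivity)
  · exact (L.localSize_mul_affineDet_le_of_small hM hm hl).trans
      (L.pow_mul_le_pow_mul (by norm_num) (by positivity))

lemma localSize_mul_affineDet_le_of_chord (h : OnCubic a b x y)
    (hys : ∀ i, OnCubic a b (xs i) (ys i)) (hrs : ∀ i, OnCubic a b (qs i) (rs i))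
    (hM : ∀ i, localSize v w (qs i) ≤ M) (hxs : ∀ i, IsChordX x y (qs i) (rs i) (xs i))
    (haff : ∀ i, ys i = y + l * (xs i - x) + ν * m i) (hm : ∀ i, v (m i) ≤ n) :
    localSize v w x * v (affineDet qs m) ≤ τ ^ 400 * (n * M ^ 3) := by
  have hM0 : 0 < M := L.scale_pos.trans_le (scale_le (hM 0))
  have hn : 0 ≤ n := (v.nonneg _).trans (hm 0)
  rcases lt_or_ge (τ ^ 10 * M ^ 2) (v x) with hl | hl
  · have hpos := L.localSize_pos x
    have hdet : AbsLE v τ 113 (n * (M ^ 3 / localSize v w x)) (affineDet xs m) := by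
      rw [AbsLE, ← mul_div_assoc, ← mul_div_assoc, le_div_iff₀ hpos, mul_comm]
      refine (L.localSize_mul_affineDet_le h hys
        (fun i ↦ L.localSize_chord_le_of_large h (hrs i) (hM i) hl (hxs i)) haff hm).trans_eq ?_
      ring
    have hsub : ∀ i, AbsLE v τ 32 (M ^ 3 / localSize v w x) (xs i - qs i) := fun i ↦ by
      rw [AbsLE, ← mul_div_assoc, le_div_iff₀ hpos]
      exact L.chord_sub_mul_localSize_le_of_large h (hrs i) (hM i) hl (hxs i)
    have hsplit : affineDet qs m = affineDet xs m - affineDet (fun i ↦ xs i - qs i) m := by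
      simp only [affineDet]
      ring
    have hqs := L.mono (l := 400) (L.sub hdet (L.absLE_affineDet hsub hm)) (by norm_num) le_rfl
    rwa [← hsplit, AbsLE, ← mul_div_assoc, ← mul_div_assoc, le_div_iff₀ hpos, mul_comm] at hqs
  · exact (L.localSize_mul_affineDet_le_of_small hM hm hl).trans
      (L.pow_mul_le_pow_mul (by norm_num) (by positivity))

end LocalScale

end Local

/-! ### Points in short Weierstrass coordinates -/

section Points

open WeierstrassCurve

variable {K : Type*} [Field K]

/-- The coefficient `a` of the short model `Y² = X³ + aX + b` of a Weierstrass curve. -/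
def shortA (W : WeierstrassCurve K) : K := -W.c₄ / 48

/-- The coefficient `b` of the short model `Y² = X³ + aX + b` of a Weierstrass curve. -/
def shortB (W : WeierstrassCurve K) : K := -W.c₆ / 864

/-- The discriminant `4a³ + 27b²` of the short model, up to sign. -/
def shortDisc (W : WeierstrassCurve K) : K := 4 * shortA W ^ 3 + 27 * shortB W ^ 2

/-- The `X`-coordinate of a point on the short model; junk value `0` at the origin. -/
def xCoord {W : WeierstrassCurve K} : W.toAffine.Point → K
  | .zero => 0
  | .some x _ _ => x + W.b₂ / 12

/-- The `Y`-coordinate of a point on the short model; junk value `0` at the origin. -/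
def yCoord {W : WeierstrassCurve K} : W.toAffine.Point → K
  | .zero => 0
  | .some x y _ => y + (W.a₁ * x + W.a₃) / 2

variable {W : WeierstrassCurve K} {P Q : W.toAffine.Point}

lemma eq_of_coord_eq (hP : P ≠ 0) (hQ : Q ≠ 0) (hx : xCoord P = xCoord Q)
    (hy : yCoord P = yCoord Q) : P = Q := by
  obtain _ | ⟨x, y, h⟩ := P
  · exact absurd rfl hP
  obtain _ | ⟨x', y', h'⟩ := Q
  · exact absurd rfl hQ
  obtain rfl : x = x' := add_right_cancel hx
  obtain rfl : y = y' := add_right_cancel hy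
  rfl

@[simp] lemma xCoord_neg (P : W.toAffine.Point) : xCoord (-P) = xCoord P := by
  cases P <;> rfl

variable [CharZero K]

lemma onCubic (hP : P ≠ 0) : OnCubic (shortA W) (shortB W) (xCoord P) (yCoord P) := by
  obtain _ | ⟨x, y, h⟩ := P
  · exact absurd rfl hP
  have heq := (Affine.equation_iff _ _).mp h.1
  simp only [xCoord, yCoord, shortA, shortB, c₄, c₆, b₂, b₄, b₆]
  linear_combination heq

lemma exists_xCoord_yCoord_eq [W.IsElliptic] {x y : K} (h : OnCubic (shortA W) (shortB W) x y) :
    ∃ P : W.toAffine.Point, P ≠ 0 ∧ xCoord P = x ∧ yCoord P = y := by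
  have hns : W.toAffine.Nonsingular (x - W.b₂ / 12) (y - (W.a₁ * (x - W.b₂ / 12) + W.a₃) / 2) := by
    rw [← Affine.equation_iff_nonsingular, Affine.equation_iff]
    simp only [OnCubic, shortA, shortB, c₄, c₆, b₂, b₄, b₆] at h ⊢
    linear_combination h
  exact ⟨.some _ _ hns, Affine.Point.some_ne_zero hns, by simp [xCoord], by simp [yCoord]⟩

@[simp] lemma yCoord_neg (P : W.toAffine.Point) : yCoord (-P) = -yCoord P := by
  obtain _ | ⟨x, y, h⟩ := P
  · exact neg_zero.symm
  · simp only [Affine.Point.neg_some, yCoord, Affine.negY]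
    ring

lemma shortDisc_eq (W : WeierstrassCurve K) : shortDisc W = -W.Δ / 16 := by
  unfold shortDisc shortA shortB
  linear_combination (1 / 27648 : K) * W.c_relation

lemma shortDisc_ne_zero (W : WeierstrassCurve K) [W.IsElliptic] : shortDisc W ≠ 0 := by
  have hΔ : W.Δ ≠ 0 := W.coe_Δ' ▸ W.Δ'.ne_zero
  simpa [shortDisc_eq] using hΔ

lemma j_mul_shortDisc (W : WeierstrassCurve K) [W.IsElliptic] :
    W.j * shortDisc W = 6912 * shortA W ^ 3 := by
  have hj : W.j * W.Δ = W.c₄ ^ 3 := by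
    rw [WeierstrassCurve.j, ← W.coe_Δ', mul_right_comm, Units.inv_mul, one_mul]
  rw [shortDisc_eq, shortA]
  linear_combination (-1 / 16 : K) * hj

lemma eq_or_eq_neg_of_xCoord_eq (hP : P ≠ 0) (hQ : Q ≠ 0) (hx : xCoord P = xCoord Q) :
    P = Q ∨ P = -Q := by
  classical
  have hsq : yCoord P ^ 2 = yCoord Q ^ 2 := by rw [onCubic hP, onCubic hQ, hx]
  rcases sq_eq_sq_iff_eq_or_eq_neg.mp hsq with hy | hy
  · exact .inl (eq_of_coord_eq hP hQ hx hy)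
  · exact .inr (eq_of_coord_eq hP (neg_ne_zero.mpr hQ) (by simpa using hx) (by simpa using hy))

variable [DecidableEq K]

lemma add_self_eq_zero_iff : P + P = 0 ↔ yCoord P = 0 := by
  rw [add_eq_zero_iff_eq_neg]
  refine ⟨fun h ↦ self_eq_neg.mp ((congrArg yCoord h).trans (yCoord_neg P)), fun h ↦ ?_⟩
  by_cases hP : P = 0
  · simp [hP]
  · exact eq_of_coord_eq hP (neg_ne_zero.mpr hP) (xCoord_neg P).symm (by simp [h])

lemma isChordX_add (hP : P ≠ 0) (hQ : Q ≠ 0) :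
    IsChordX (xCoord P) (yCoord P) (xCoord Q) (yCoord Q) (xCoord (P + Q)) := by
  intro hne
  obtain _ | ⟨x, y, h⟩ := P
  · exact absurd rfl hP
  obtain _ | ⟨x', y', h'⟩ := Q
  · exact absurd rfl hQ
  have hx : x ≠ x' := fun hx ↦ hne (congrArg (· + W.b₂ / 12) hx)
  have hslope : W.toAffine.slope x x' y y' * (x - x') = y - y' := by
    rw [Affine.slope_of_X_ne hx, div_mul_cancel₀ _ (sub_ne_zero.mpr hx)]
  rw [Affine.Point.add_of_X_ne hx]
  simp only [xCoord, yCoord, Affine.addX, b₂]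
  linear_combination (W.toAffine.slope x x' y y' * (x - x') + (y - y') + W.a₁ * (x - x')) * hslope

lemma isChordX_sub (hP : P ≠ 0) (hne : Q - P ≠ 0) :
    IsChordX (xCoord P) (yCoord P) (xCoord (Q - P)) (yCoord (Q - P)) (xCoord Q) := by
  simpa using isChordX_add hP hne

lemma xCoord_add_self_mul (hP : P ≠ 0) (hy : yCoord P ≠ 0) :
    xCoord (P + P) * (4 * yCoord P ^ 2) = dblNum (shortA W) (shortB W) (xCoord P) := by
  suffices h : xCoord (P + P) * (4 * yCoord P ^ 2)
      = (3 * xCoord P ^ 2 + shortA W) ^ 2 - 8 * xCoord P * yCoord P ^ 2 by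
    rw [h, onCubic hP, dblNum]
    ring
  obtain _ | ⟨x, y, h⟩ := P
  · exact absurd rfl hP
  have hneg : y - W.toAffine.negY x y = 2 * yCoord (.some x y h) := by
    simp only [Affine.negY, yCoord]
    ring
  have hne : y ≠ W.toAffine.negY x y := fun hyy ↦ by
    rw [← sub_eq_zero, hneg] at hyy
    exact hy (by simpa using hyy)
  have hslope : (W.toAffine.slope x x y y + W.a₁ / 2) * (2 * yCoord (.some x y h))
      = 3 * xCoord (.some x y h) ^ 2 + shortA W := by
    rw [add_mul, Affine.slope_of_Y_ne rfl hne, hneg, div_mul_cancel₀ _ (by simpa using hy)]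
    simp only [xCoord, yCoord, shortA, c₄, b₂, b₄]
    ring
  rw [Affine.Point.add_self_of_Y_ne hne, ← hslope]
  simp only [xCoord, Affine.addX, b₂]
  ring

end Points

/-! ### The height -/

section Height

open Function WeierstrassCurve

variable (W : WeierstrassCurve ℚ)

/-- The idele absorbing every constant of the local estimates; it depends on the `j`-invariant
only. -/
noncomputable def errorIdele (j : ℚ) : PosIdele :=
  .atInfinity 100 (by norm_num) * .maxOne (1 / 4) * .maxOne (j / 6912)
    * .maxOne ((1728 - j) / 46656)

/-- The error term, depending on the `j`-invariant only, of the height inequalities. -/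
noncomputable def heightError (j : ℚ) : ℝ := (errorIdele j).deg

lemma one_le_atInfinity_hundred (v : Place) :
    1 ≤ PosIdele.atInfinity 100 (by norm_num) v :=
  PosIdele.one_le_atInfinity v (by norm_num)

lemma le_errorIdele (j : ℚ) (v : Place) :
    PosIdele.atInfinity 100 (by norm_num) v ≤ errorIdele j v ∧
      PosIdele.maxOne (1 / 4) v ≤ errorIdele j v ∧
      PosIdele.maxOne (j / 6912) v ≤ errorIdele j v ∧
      PosIdele.maxOne ((1728 - j) / 46656) v ≤ errorIdele j v := by
  have h₁ := one_le_atInfinity_hundred v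
  have h₂ := PosIdele.one_le_maxOne v (1 / 4)
  have h₃ := PosIdele.one_le_maxOne v (j / 6912)
  have h₄ := PosIdele.one_le_maxOne v ((1728 - j) / 46656)
  have h₁₂ := one_le_mul_of_one_le_of_one_le h₁ h₂
  have h₃₄ := one_le_mul_of_one_le_of_one_le h₃ h₄
  have h := one_le_mul_of_one_le_of_one_le h₁₂ h₃₄
  simp only [errorIdele, PosIdele.mul_apply, mul_assoc] at *
  refine ⟨?_, ?_, ?_, ?_⟩ <;> nlinarith

lemma one_le_errorIdele (j : ℚ) (v : Place) : 1 ≤ errorIdele j v :=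
  (one_le_atInfinity_hundred v).trans (le_errorIdele j v).1

lemma heightError_nonneg (j : ℚ) : 0 ≤ heightError j :=
  PosIdele.deg_nonneg _ (one_le_errorIdele j)

lemma quasiUltrametric_errorIdele (j : ℚ) (v : Place) :
    QuasiUltrametric v.abs (errorIdele j v) where
  one_le := one_le_errorIdele j v
  add_le_mul_max x y := (PosIdele.abs_add_le_atInfinity_mul_max v (by norm_num) x y).trans
    (mul_le_mul_of_nonneg_right (le_errorIdele j v).1 (le_max_of_le_left (v.abs.nonneg x)))
  natCast_le n hn := (le_errorIdele j v).1.trans' <| by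
    exact_mod_cast PosIdele.abs_intCast_le_atInfinity v (k := n) (by simpa using mod_cast hn)

variable [W.IsElliptic]

/-- The twelfth root of the discriminant. Measuring the coordinates of points against it makes
the height invariant under twisting. -/
noncomputable def scale : PosIdele :=
  .ofFun (fun v ↦ v.abs (shortDisc W) ^ (1 / 12 : ℝ))
    (fun v ↦ Real.rpow_pos_of_pos (v.abs.pos (shortDisc_ne_zero W)) _)
    ((Place.hasFiniteMulSupport_abs (shortDisc_ne_zero W)).subset fun v hv h ↦ hv (by
      simp only [h, Real.one_rpow]))

lemma scale_pow_twelve (v : Place) : scale W v ^ 12 = v.abs (shortDisc W) := by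
  change (v.abs (shortDisc W) ^ (1 / 12 : ℝ)) ^ 12 = _
  rw [← Real.rpow_natCast, ← Real.rpow_mul (v.abs.nonneg _)]
  norm_num

@[simp] lemma deg_scale : (scale W).deg = 0 := by
  have h : scale W ^ 12 = .principal _ (shortDisc_ne_zero W) :=
    Subtype.ext (funext fun v ↦ Subtype.ext (scale_pow_twelve W v))
  simpa using congrArg PosIdele.deg h

lemma le_mul_pow_of_pow_eq {F : Type*} [Field F] {v : AbsoluteValue F ℝ} {x c d : F} {r w : ℝ}
    {n k : ℕ} (hk : k ≠ 0) (hw : 0 ≤ w) (hr : 1 ≤ r) (hx : x ^ k = c * d) (hc : v c ≤ r)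
    (hd : w ^ (n * k) = v d) : v x ≤ r * w ^ n := by
  refine le_of_pow_le_pow_left₀ hk (by positivity) ?_
  calc v x ^ k = v c * w ^ (n * k) := by rw [← v.map_pow, hx, v.map_mul, hd]
    _ ≤ r ^ k * w ^ (n * k) := by
        gcongr
        exact hc.trans (le_self_pow₀ hr hk)
    _ = (r * w ^ n) ^ k := by rw [mul_pow, pow_mul]

lemma localScale (v : Place) :
    LocalScale v.abs (errorIdele W.j v) (scale W v) (shortA W) (shortB W) := by
  obtain ⟨-, hfour, hj, hj'⟩ := le_errorIdele W.j v
  have hone := one_le_errorIdele W.j v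
  have hw := ((scale W).pos v).le
  refine ⟨quasiUltrametric_errorIdele W.j v, (scale W).pos v, ?_, ?_, ?_,
    (scale_pow_twelve W v).symm⟩
  · calc 1 = v.abs (1 / 4) * v.abs 4 := by rw [← v.abs.map_mul]; norm_num
      _ ≤ errorIdele W.j v * v.abs 4 :=
        mul_le_mul_of_nonneg_right ((PosIdele.abs_le_maxOne v _).trans hfour) (v.abs.nonneg _)
  · refine le_mul_pow_of_pow_eq three_ne_zero hw hone (c := W.j / 6912) ?_
      ((PosIdele.abs_le_maxOne v _).trans hj) (scale_pow_twelve W v)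
    linear_combination (-1 / 6912 : ℚ) * j_mul_shortDisc W
  · refine le_mul_pow_of_pow_eq two_ne_zero hw hone (c := (1728 - W.j) / 46656) ?_
      ((PosIdele.abs_le_maxOne v _).trans hj') (scale_pow_twelve W v)
    have h := j_mul_shortDisc W
    unfold shortDisc at h ⊢
    linear_combination (1 / 46656 : ℚ) * h

/-- The idele of local sizes of `x`. -/
noncomputable def size (x : ℚ) : PosIdele :=
  .ofFun (fun v ↦ localSize v.abs (scale W v) x) (fun v ↦ (localScale W v).localSize_pos x) (by
    have hscale : HasFiniteMulSupport fun v ↦ scale W v :=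
      (scale W).2.subset fun v hv h ↦ hv (congrArg Subtype.val h)
    rcases eq_or_ne x 0 with rfl | hx
    · simpa [localSize, max_eq_right ((scale W).pos _).le] using hscale
    · refine HasFiniteMulSupport.max ?_ hscale
      exact (Place.hasFiniteMulSupport_abs hx).subset fun v hv h ↦ hv (by
        simp only [h, Real.sqrt_one]))

@[simp] lemma size_apply (x : ℚ) (v : Place) : size W x v = localSize v.abs (scale W v) x := rfl

lemma scale_le_size (x : ℚ) (v : Place) : scale W v ≤ size W x v := le_localSize _ _ _

/-- The height of a point: a Weil height of its `X`-coordinate, normalised by the discriminant. -/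
noncomputable def height : W.toAffine.Point → ℝ
  | .zero => 0
  | .some x _ _ => 2 * (size W (x + W.b₂ / 12)).deg

variable {W} {P Q : W.toAffine.Point}

@[simp] lemma height_zero : height W 0 = 0 := rfl

lemma height_of_ne_zero (hP : P ≠ 0) : height W P = 2 * (size W (xCoord P)).deg := by
  cases P
  · exact absurd rfl hP
  · rfl

@[simp] lemma height_neg (P : W.toAffine.Point) : height W (-P) = height W P := by
  cases P <;> rfl

lemma height_nonneg (P : W.toAffine.Point) : 0 ≤ height W P := by
  by_cases hP : P = 0
  · simp [hP]
  · have := PosIdele.deg_mono (scale_le_size W (xCoord P))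
    rw [deg_scale] at this
    rw [height_of_ne_zero hP]
    positivity

lemma height_add_self_le (P : W.toAffine.Point) :
    height W (P + P) ≤ 4 * height W P + 200 * heightError W.j := by
  have he := heightError_nonneg W.j
  have hnonneg := height_nonneg P
  by_cases hy : yCoord P = 0
  · rw [add_self_eq_zero_iff.mpr hy, height_zero]
    positivity
  have hP : P ≠ 0 := by rintro rfl; exact hy rfl
  have h4 : 4 * yCoord P ^ 2 ≠ 0 := by positivity
  have hdeg := PosIdele.deg_mono
    (f := size W (xCoord (P + P)) ^ 2 * PosIdele.principal (4 * yCoord P ^ 2) h4)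
    (g := errorIdele W.j ^ 40 * size W (xCoord P) ^ 8)
    fun v ↦ by
      simpa only [PosIdele.mul_apply, PosIdele.pow_apply, PosIdele.principal_apply,
        size_apply] using
        (localScale W v).localSize_dbl_le (onCubic hP) (xCoord_add_self_mul hP hy)
  simp only [PosIdele.deg_mul, PosIdele.deg_pow, PosIdele.deg_principal,
    ← heightError.eq_def] at hdeg
  rw [height_of_ne_zero hP, height_of_ne_zero (mt add_self_eq_zero_iff.mp hy)]
  push_cast at hdeg
  linarith

lemma le_height_add_self (P : W.toAffine.Point) :
    4 * height W P ≤ height W (P + P) + 200 * heightError W.j := by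
  have he := heightError_nonneg W.j
  by_cases hP : P = 0
  · simp [hP, he]
  rw [height_of_ne_zero hP]
  by_cases hy : yCoord P = 0
  · have hcubic : OnCubic (shortA W) (shortB W) (xCoord P) 0 := hy ▸ onCubic hP
    have hdeg := PosIdele.deg_mono (f := size W (xCoord P)) (g := errorIdele W.j ^ 5 * scale W)
      fun v ↦ by
      simpa only [PosIdele.mul_apply, PosIdele.pow_apply, PosIdele.principal_apply,
        size_apply] using
        (localScale W v).localSize_le_of_onCubic_zero hcubic
    simp only [PosIdele.deg_mul, PosIdele.deg_pow, deg_scale, ← heightError.eq_def] at hdeg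
    rw [add_self_eq_zero_iff.mpr hy, height_zero]
    push_cast at hdeg
    linarith
  have h4 : 4 * yCoord P ^ 2 ≠ 0 := by positivity
  have hdeg := PosIdele.deg_mono (f := size W (xCoord P) ^ 8)
    (g := errorIdele W.j ^ 200
      * (size W (xCoord (P + P)) ^ 2 * PosIdele.principal (4 * yCoord P ^ 2) h4))
    fun v ↦ by
      simpa only [PosIdele.mul_apply, PosIdele.pow_apply, PosIdele.principal_apply,
        size_apply] using
        (localScale W v).le_localSize_dbl (onCubic hP) (xCoord_add_self_mul hP hy)
  simp only [PosIdele.deg_mul, PosIdele.deg_pow, PosIdele.deg_principal,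
    ← heightError.eq_def] at hdeg
  rw [height_of_ne_zero (mt add_self_eq_zero_iff.mp hy)]
  push_cast at hdeg
  linarith

variable (W) in
lemma size_le_mul_size_div_scale (x x' : ℚ) (v : Place) :
    size W x v ≤ (size W x * size W x' / scale W) v := by
  rw [PosIdele.div_apply, PosIdele.mul_apply, mul_div_assoc]
  exact le_mul_of_one_le_right ((size W x).pos v).le
    ((one_le_div₀ ((scale W).pos v)).mpr (scale_le_size W x' v))

variable (W) in
lemma size_le_size_mul_div_scale (x x' : ℚ) (v : Place) :
    size W x' v ≤ (size W x * size W x' / scale W) v :=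
  mul_comm (size W x') (size W x) ▸ size_le_mul_size_div_scale W x' x v

lemma height_add_le_of_xCoord_ne (hP : P ≠ 0) (hQ : Q ≠ 0) (hne : xCoord P ≠ xCoord Q) :
    height W (P + Q) ≤ 3 * height W P + 3 * height W Q + 40 * heightError W.j := by
  have hsum : P + Q ≠ 0 := fun h ↦ hne (by rw [eq_neg_of_add_eq_zero_left h, xCoord_neg])
  have hdeg := PosIdele.deg_mono
    (f := size W (xCoord (P + Q)) ^ 2 * PosIdele.principal _ (sub_ne_zero.mpr hne) ^ 2)
    (g := errorIdele W.j ^ 40 * (size W (xCoord P) * size W (xCoord Q) / scale W) ^ 6)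
    fun v ↦ by
      simpa only [PosIdele.mul_apply, PosIdele.pow_apply, PosIdele.principal_apply,
        size_apply] using
        (localScale W v).localSize_sq_mul_sub_sq_le (onCubic hP) (onCubic hQ)
          (size_le_mul_size_div_scale W _ _ v)
          (size_le_size_mul_div_scale W _ _ v) hne (isChordX_add hP hQ)
  simp only [PosIdele.deg_mul, PosIdele.deg_pow, PosIdele.deg_div, PosIdele.deg_principal,
    deg_scale, ← heightError.eq_def] at hdeg
  rw [height_of_ne_zero hP, height_of_ne_zero hQ, height_of_ne_zero hsum]
  push_cast at hdeg
  linarith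

lemma height_add_le (P Q : W.toAffine.Point) :
    height W (P + Q) ≤ 3 * height W P + 3 * height W Q + 200 * heightError W.j := by
  have he := heightError_nonneg W.j
  have hP0 := height_nonneg P
  have hQ0 := height_nonneg Q
  by_cases hP : P = 0
  · rw [hP, zero_add, height_zero]
    linarith
  by_cases hQ : Q = 0
  · rw [hQ, add_zero, height_zero]
    linarith
  by_cases hx : xCoord P = xCoord Q
  · rcases eq_or_eq_neg_of_xCoord_eq hP hQ hx with rfl | rfl
    · linarith [height_add_self_le P]
    · rw [neg_add_cancel, height_zero]
      positivity
  · linarith [height_add_le_of_xCoord_ne hP hQ hx]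

section Relations

variable {N : ℕ} {d d₁ d₂ : ℤ}

lemma height_le_of_linear {P₁ P₂ : W.toAffine.Point} (hP : P ≠ 0) (hP₁ : P₁ ≠ 0) (hP₂ : P₂ ≠ 0)
    (hlin : xCoord P * d = d₁ * xCoord P₁ - d₂ * xCoord P₂) (hd₀ : d ≠ 0)
    (hd : |(d : ℝ)| ≤ N) (hd₁ : |(d₁ : ℝ)| ≤ N) (hd₂ : |(d₂ : ℝ)| ≤ N) :
    height W P ≤ height W P₁ + height W P₂ + Real.log N + heightError W.j := by
  have hN : (0 : ℝ) < N := (abs_pos.mpr (Int.cast_ne_zero.mpr hd₀)).trans_le hd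
  have hdeg := PosIdele.deg_mono
    (f := size W (xCoord P) ^ 2 * PosIdele.principal (d : ℚ) (Int.cast_ne_zero.mpr hd₀))
    (g := errorIdele W.j
      * (PosIdele.atInfinity N hN * (size W (xCoord P₁) * size W (xCoord P₂) / scale W) ^ 2))
    fun v ↦ by
      simpa only [PosIdele.mul_apply, PosIdele.pow_apply, PosIdele.principal_apply,
        size_apply] using
        (localScale W v).localSize_sq_mul_le_of_linear (size_le_mul_size_div_scale W _ _ v)
          (size_le_size_mul_div_scale W _ _ v) hlin (PosIdele.abs_intCast_le_atInfinity v hd)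
          (PosIdele.abs_intCast_le_atInfinity v hd₁) (PosIdele.abs_intCast_le_atInfinity v hd₂)
  simp only [PosIdele.deg_mul, PosIdele.deg_pow, PosIdele.deg_div, PosIdele.deg_principal,
    PosIdele.deg_atInfinity, deg_scale, ← heightError.eq_def] at hdeg
  rw [height_of_ne_zero hP, height_of_ne_zero hP₁, height_of_ne_zero hP₂]
  push_cast at hdeg
  linarith

lemma height_le_of_linear_sub {P₁ P₂ : W.toAffine.Point} (hP : P ≠ 0) (hP₁ : P₁ ≠ P)
    (hP₂ : P₂ ≠ P) (hlin : xCoord P * d = d₁ * xCoord P₁ - d₂ * xCoord P₂) (hd₀ : d ≠ 0)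
    (hd : |(d : ℝ)| ≤ N) (hd₁ : |(d₁ : ℝ)| ≤ N) (hd₂ : |(d₂ : ℝ)| ≤ N) :
    height W P ≤ height W (P₁ - P) + height W (P₂ - P) + Real.log N + 50 * heightError W.j := by
  have hN : (0 : ℝ) < N := (abs_pos.mpr (Int.cast_ne_zero.mpr hd₀)).trans_le hd
  replace hP₁ := sub_ne_zero.mpr hP₁
  replace hP₂ := sub_ne_zero.mpr hP₂
  have hdeg := PosIdele.deg_mono
    (f := size W (xCoord P) ^ 2 * PosIdele.principal (d : ℚ) (Int.cast_ne_zero.mpr hd₀))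
    (g := errorIdele W.j ^ 50
      * (PosIdele.atInfinity N hN
        * (size W (xCoord (P₁ - P)) * size W (xCoord (P₂ - P)) / scale W) ^ 2))
    fun v ↦ by
      simpa only [PosIdele.mul_apply, PosIdele.pow_apply, PosIdele.principal_apply,
        size_apply] using
        (localScale W v).localSize_sq_mul_le_of_linear_chord (onCubic hP) (onCubic hP₁)
          (onCubic hP₂) (size_le_mul_size_div_scale W _ _ v) (size_le_size_mul_div_scale W _ _ v)
          (isChordX_sub hP hP₁) (isChordX_sub hP hP₂) hlin (PosIdele.abs_intCast_le_atInfinity v hd)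
          (PosIdele.abs_intCast_le_atInfinity v hd₁) (PosIdele.abs_intCast_le_atInfinity v hd₂)
  simp only [PosIdele.deg_mul, PosIdele.deg_pow, PosIdele.deg_div, PosIdele.deg_principal,
    PosIdele.deg_atInfinity, deg_scale, ← heightError.eq_def] at hdeg
  rw [height_of_ne_zero hP, height_of_ne_zero hP₁, height_of_ne_zero hP₂]
  push_cast at hdeg
  linarith

lemma le_prod_div_pow {n : ℕ} {w : ℝ} {s : Fin (n + 1) → ℝ} (hw : 0 < w) (hs : ∀ i, w ≤ s i)
    (i : Fin (n + 1)) : s i ≤ (∏ j, s j) / w ^ n := by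
  rw [le_div_iff₀ (pow_pos hw n), Fin.prod_univ_succAbove _ i]
  refine mul_le_mul_of_nonneg_left ?_ (hw.le.trans (hs i))
  simpa using Finset.prod_le_prod (s := Finset.univ) (fun _ _ ↦ hw.le)
    fun j _ ↦ hs (i.succAbove j)

lemma size_le_prod_div_scale_sq (q : Fin 3 → ℚ) (v : Place) (i : Fin 3) :
    size W (q i) v ≤ (size W (q 0) * size W (q 1) * size W (q 2) / scale W ^ 2) v := by
  simpa [Fin.prod_univ_three] using
    le_prod_div_pow ((scale W).pos v) (fun j ↦ scale_le_size W (q j) v) i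

lemma height_le_of_localSize_mul_le {Qs : Fin 3 → W.toAffine.Point} {k : ℕ} {D : ℚ} (hP : P ≠ 0)
    (hQs : ∀ i, Qs i ≠ 0) (hN : (0 : ℝ) < N) (hD : D ≠ 0)
    (hloc : ∀ v, size W (xCoord P) v * v.abs D ≤ errorIdele W.j v ^ k
      * (PosIdele.atInfinity N hN v * ((size W (xCoord (Qs 0)) * size W (xCoord (Qs 1))
        * size W (xCoord (Qs 2)) / scale W ^ 2) v) ^ 3)) :
    height W P ≤ 3 * ∑ i, height W (Qs i) + 2 * Real.log N + 2 * k * heightError W.j := by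
  have hdeg := PosIdele.deg_mono (f := size W (xCoord P) * PosIdele.principal D hD)
    (g := errorIdele W.j ^ k * (PosIdele.atInfinity N hN * (size W (xCoord (Qs 0)) *
      size W (xCoord (Qs 1)) * size W (xCoord (Qs 2)) / scale W ^ 2) ^ 3)) fun v ↦ by
      simpa only [PosIdele.mul_apply, PosIdele.pow_apply, PosIdele.principal_apply] using hloc v
  simp only [PosIdele.deg_mul, PosIdele.deg_pow, PosIdele.deg_div, PosIdele.deg_principal,
    PosIdele.deg_atInfinity, deg_scale, ← heightError.eq_def] at hdeg
  rw [Fin.sum_univ_three, height_of_ne_zero hP, height_of_ne_zero (hQs 0),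
    height_of_ne_zero (hQs 1), height_of_ne_zero (hQs 2)]
  push_cast at hdeg
  linarith

variable {Ps : Fin 3 → W.toAffine.Point} {m : Fin 3 → ℤ} {l ν : ℚ}

lemma height_le_of_affine (hP : P ≠ 0) (hPs : ∀ i, Ps i ≠ 0)
    (haff : ∀ i, yCoord (Ps i) = yCoord P + l * (xCoord (Ps i) - xCoord P) + ν * m i)
    (hN : 0 < N) (hm : ∀ i, |(m i : ℝ)| ≤ N)
    (hdet : affineDet (fun i ↦ xCoord (Ps i)) (fun i ↦ (m i : ℚ)) ≠ 0) :
    height W P ≤ 3 * ∑ i, height W (Ps i) + 2 * Real.log N + 100 * heightError W.j := by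
  refine (height_le_of_localSize_mul_le (k := 50) hP hPs (Nat.cast_pos.mpr hN) hdet
    fun v ↦ ?_).trans_eq (by norm_num)
  exact (localScale W v).localSize_mul_affineDet_le (onCubic hP) (fun i ↦ onCubic (hPs i))
    (size_le_prod_div_scale_sq (fun i ↦ xCoord (Ps i)) v) haff
    fun i ↦ PosIdele.abs_intCast_le_atInfinity v (hm i)

lemma height_le_of_affine_sub (hP : P ≠ 0) (hPs : ∀ i, Ps i ≠ 0) (hne : ∀ i, Ps i ≠ P)
    (haff : ∀ i, yCoord (Ps i) = yCoord P + l * (xCoord (Ps i) - xCoord P) + ν * m i)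
    (hN : 0 < N) (hm : ∀ i, |(m i : ℝ)| ≤ N)
    (hdet : affineDet (fun i ↦ xCoord (Ps i - P)) (fun i ↦ (m i : ℚ)) ≠ 0) :
    height W P ≤ 3 * ∑ i, height W (Ps i - P) + 2 * Real.log N + 800 * heightError W.j := by
  have hsub : ∀ i, Ps i - P ≠ 0 := fun i ↦ sub_ne_zero.mpr (hne i)
  refine (height_le_of_localSize_mul_le (k := 400) hP hsub (Nat.cast_pos.mpr hN) hdet
    fun v ↦ ?_).trans_eq (by norm_num)
  exact (localScale W v).localSize_mul_affineDet_le_of_chord (onCubic hP)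
    (fun i ↦ onCubic (hPs i)) (fun i ↦ onCubic (hsub i))
    (size_le_prod_div_scale_sq (fun i ↦ xCoord (Ps i - P)) v)
    (fun i ↦ isChordX_sub hP (hsub i)) haff fun i ↦ PosIdele.abs_intCast_le_atInfinity v (hm i)

end Relations

section Count

lemma localSize_pow_twelve_eq {v : AbsoluteValue ℚ ℝ} {w : ℝ} (hw : 0 ≤ w) (x : ℚ) :
    localSize v w x ^ 12 = max (v (x ^ 6)) (w ^ 12) := by
  rw [localSize, (pow_left_monotoneOn (n := 12)).map_max (Real.sqrt_nonneg _) hw]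
  congr 1
  rw [v.map_pow, show 12 = 2 * 6 from rfl, pow_mul, Real.sq_sqrt (v.nonneg x)]

lemma height_eq_log (hP : P ≠ 0) :
    6 * height W P = Real.log (max (xCoord P ^ 6 / shortDisc W).num.natAbs
      (xCoord P ^ 6 / shortDisc W).den : ℕ) := by
  have hD := shortDisc_ne_zero W
  have h : size W (xCoord P) ^ 12
      = .maxOne (xCoord P ^ 6 / shortDisc W) * PosIdele.principal (shortDisc W) hD := by
    refine Subtype.ext (funext fun v ↦ Subtype.ext ?_)
    change localSize v.abs (scale W v) (xCoord P) ^ 12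
      = max (v.abs (xCoord P ^ 6 / shortDisc W)) 1 * v.abs (shortDisc W)
    rw [localSize_pow_twelve_eq ((scale W).pos v).le, scale_pow_twelve,
      max_mul_of_nonneg _ _ (v.abs.nonneg _), one_mul, ← v.abs.map_mul, div_mul_cancel₀ _ hD]
  have hdeg := congrArg PosIdele.deg h
  simp only [PosIdele.deg_mul, PosIdele.deg_pow, PosIdele.deg_principal, add_zero,
    PosIdele.deg_maxOne] at hdeg
  rw [height_of_ne_zero hP, ← hdeg]
  push_cast
  ring

lemma eq_of_pow_eq_of_sign_eq {x y : ℚ} {n : ℕ} (hn : n ≠ 0) (h : x ^ n = y ^ n)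
    (hs : SignType.sign x = SignType.sign y) : x = y := by
  have habs : |x| = |y| := (pow_left_inj₀ (abs_nonneg _) (abs_nonneg _) hn).mp (by
    rw [← abs_pow, h, abs_pow])
  rw [← sign_mul_abs x, ← sign_mul_abs y, habs, hs]

variable (W) in
/-- The numerator and denominator of `X⁶ / (4a³ + 27b²)` together with the signs of `X` and `Y`,
which determine a nonzero point `(X, Y)`. -/
def code (P : W.toAffine.Point) : ℤ × ℕ × SignType × SignType :=
  ((xCoord P ^ 6 / shortDisc W).num, (xCoord P ^ 6 / shortDisc W).den,
    SignType.sign (xCoord P), SignType.sign (yCoord P))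

lemma code_injOn : Set.InjOn (code W) {P | P ≠ 0} := by
  intro P hP Q hQ h
  simp only [code, Prod.mk.injEq] at h
  obtain ⟨hnum, hden, hsx, hsy⟩ := h
  have hx : xCoord P = xCoord Q := eq_of_pow_eq_of_sign_eq (n := 6) (by norm_num)
    ((div_left_inj' (shortDisc_ne_zero W)).mp (Rat.ext hnum hden)) hsx
  have hy : yCoord P = yCoord Q := eq_of_pow_eq_of_sign_eq two_ne_zero (by
    rw [onCubic hP, onCubic hQ, hx]) hsy
  exact eq_of_coord_eq hP hQ hx hy

lemma code_mem (hP : P ≠ 0) {t : ℝ} (ht : height W P ≤ t) :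
    code W P ∈ Finset.Icc (-⌊Real.exp (6 * t)⌋₊ : ℤ) ⌊Real.exp (6 * t)⌋₊ ×ˢ
      Finset.range (⌊Real.exp (6 * t)⌋₊ + 1) ×ˢ Finset.univ := by
  set q := xCoord P ^ 6 / shortDisc W with hq
  have hmax : max q.num.natAbs q.den ≤ ⌊Real.exp (6 * t)⌋₊ := by
    refine Nat.le_floor ((Real.log_le_iff_le_exp ?_).mp ?_)
    · exact_mod_cast lt_max_of_lt_right q.den_pos
    · rw [← height_eq_log hP]
      linarith
  have := (le_max_left _ _).trans hmax
  have := (le_max_right _ _).trans hmax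
  simp only [code, Finset.mem_product, Finset.mem_Icc, Finset.mem_range, Finset.mem_univ,
    and_true, ← hq]
  omega

lemma card_le_of_height_le {s : Finset W.toAffine.Point} {t : ℝ} (ht : 0 ≤ t)
    (hs : ∀ P ∈ s, height W P ≤ t) : (s.card : ℝ) ≤ 100 * Real.exp (12 * t) := by
  classical
  set R := ⌊Real.exp (6 * t)⌋₊ with hR
  have hRle : (R : ℝ) ≤ Real.exp (6 * t) := Nat.floor_le (Real.exp_nonneg _)
  have hRone : (1 : ℝ) ≤ R := by
    exact_mod_cast Nat.le_floor (by simpa using ht : ((1 : ℕ) : ℝ) ≤ Real.exp (6 * t))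
  have hcard : (s.erase 0).card ≤ (2 * R + 1) * ((R + 1) * 9) := by
    refine (Finset.card_le_card_of_injOn (code W)
      (fun P hP ↦ code_mem (Finset.ne_of_mem_erase hP) (hs P (Finset.mem_of_mem_erase hP)))
      (code_injOn.mono fun P hP ↦ Finset.ne_of_mem_erase hP)).trans_eq ?_
    rw [Finset.card_product, Finset.card_product, Int.card_Icc, Finset.card_range,
      show (Finset.univ : Finset (SignType × SignType)).card = 9 from rfl, ← hR]
    congr 1
    omega
  have hs' : (s.card : ℝ) ≤ (2 * R + 1) * ((R + 1) * 9) + 1 := by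
    exact_mod_cast Nat.le_add_of_sub_le (Finset.pred_card_le_card_erase.trans hcard)
  calc (s.card : ℝ) ≤ 100 * (R : ℝ) ^ 2 := by nlinarith
    _ ≤ 100 * Real.exp (6 * t) ^ 2 := by gcongr
    _ = 100 * Real.exp (12 * t) := by rw [← Real.exp_nat_mul]; ring_nf

end Count

end Height

/-! ### Elements with prescribed valuations modulo `n` -/

section Selmer

open IsDedekindDomain FractionalIdeal nonZeroDivisors

/-- The subgroup of `n`-th powers. -/
abbrev powers (G : Type*) [CommGroup G] (n : ℕ) : Subgroup G := (powMonoidHom n : G →* G).range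

variable {R : Type*} [CommRing R] [IsDedekindDomain R] (K : Type*) [Field K] [Algebra R K]
  [IsFractionRing R K]

/-- The preimage in `Kˣ` of the Selmer group `K(S, n)`: the elements whose valuations outside `S`
are divisible by `n`. -/
noncomputable def selmerSubgroup (S : Set (HeightOneSpectrum R)) (n : ℕ) : Subgroup Kˣ :=
  ⨅ v : ↥Sᶜ, (powers _ n).comap v.1.valuationOfNeZero

variable {K}

lemma mem_selmerSubgroup {S : Set (HeightOneSpectrum R)} {n : ℕ} {z : Kˣ} :
    z ∈ selmerSubgroup K S n ↔ ∀ v ∉ S, v.valuationOfNeZero z ∈ powers (Multiplicative ℤ) n := by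
  simp [selmerSubgroup, Subgroup.mem_iInf]

variable (K) in
lemma relIndex_selmerSubgroup_empty_ne_zero {S : Set (HeightOneSpectrum R)} (hS : S.Finite) {n : ℕ}
    (hn : n ≠ 0) : (selmerSubgroup (R := R) K ∅ n).relIndex (selmerSubgroup K S n) ≠ 0 := by
  have := hS.to_subtype
  have hpow := Subgroup.finiteIndex_range_powMonoidHom_of_fg (Multiplicative ℤ) hn
  have hinf : (⨅ v : S, (powers _ n).comap v.1.valuationOfNeZero).relIndex
      (selmerSubgroup K S n) ≠ 0 :=
    Subgroup.relIndex_iInf_ne_zero fun v ↦ by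
      rw [Subgroup.relIndex_comap]
      exact mt Subgroup.index_eq_zero_of_relIndex_eq_zero hpow.index_ne_zero
  have hle : selmerSubgroup K S n ⊓ (⨅ v : S, (powers _ n).comap v.1.valuationOfNeZero)
      ≤ selmerSubgroup (R := R) K ∅ n := fun z ⟨hout, hin⟩ ↦ mem_selmerSubgroup.mpr fun v _ ↦ by
    by_cases hv : v ∈ S
    · exact Subgroup.mem_iInf.mp hin ⟨v, hv⟩
    · exact mem_selmerSubgroup.mp hout v hv
  rw [← Subgroup.inf_relIndex_left] at hinf
  exact mt (Subgroup.relIndex_eq_zero_of_le_left hle) hinf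

lemma valuationOfNeZero_eq_ofAdd_count (v : HeightOneSpectrum R) (z : Kˣ) :
    v.valuationOfNeZero z = Multiplicative.ofAdd (-count K v (spanSingleton R⁰ (z : K))) := by
  classical
  rw [← WithZero.coe_inj, HeightOneSpectrum.valuationOfNeZero_eq]
  have hint (t : R) (ht : t ≠ 0) : v.valuation K (algebraMap R K t)
      = WithZero.exp (-count K v (spanSingleton R⁰ (algebraMap R K t))) := by
    rw [HeightOneSpectrum.valuation_of_algebraMap, HeightOneSpectrum.intValuation_if_neg v ht,
      ← coeIdeal_span_singleton, count_coe K v (by simpa using ht)]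
  obtain ⟨r, s, hs, hrs⟩ := IsFractionRing.div_surjective (A := R) (z : K)
  have hs₀ : s ≠ 0 := nonZeroDivisors.ne_zero hs
  have hr₀ : r ≠ 0 := by
    rintro rfl
    exact z.ne_zero (by simpa using hrs.symm)
  have hmul : spanSingleton R⁰ (algebraMap R K r)
      = spanSingleton R⁰ (z : K) * spanSingleton R⁰ (algebraMap R K s) := by
    rw [spanSingleton_mul_spanSingleton, ← hrs, div_mul_cancel₀ _ (by simpa using hs₀)]
  have hcount := congrArg (count K v) hmul
  rw [count_mul K v (by simp [spanSingleton_eq_zero_iff])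
    (by simpa [spanSingleton_eq_zero_iff] using hs₀)] at hcount
  rw [← hrs, map_div₀, hint r hr₀, hint s hs₀, hrs, hcount, ← WithZero.exp_sub, WithZero.exp]
  congr 2
  ring

lemma exists_pow_eq_toPrincipalIdeal {n : ℕ} (hn : n ≠ 0) {z : Kˣ}
    (hz : z ∈ selmerSubgroup (R := R) K ∅ n) :
    ∃ I : (FractionalIdeal R⁰ K)ˣ, I ^ n = toPrincipalIdeal R K z := by
  have hdvd (v : HeightOneSpectrum R) : (n : ℤ) ∣ count K v (spanSingleton R⁰ (z : K)) := by
    obtain ⟨m, hm⟩ := mem_selmerSubgroup.mp hz v (Set.notMem_empty v)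
    rw [valuationOfNeZero_eq_ofAdd_count] at hm
    refine dvd_neg.mp ⟨m.toAdd, ?_⟩
    simpa using (congrArg Multiplicative.toAdd hm).symm
  choose m hm using hdvd
  have hz₀ : spanSingleton R⁰ (z : K) ≠ 0 := by simp [spanSingleton_eq_zero_iff]
  have hprod : (∏ᶠ v : HeightOneSpectrum R, (v.asIdeal : FractionalIdeal R⁰ K) ^ m v) ^ n
      = spanSingleton R⁰ (z : K) := by
    rw [finprod_pow, ← finprod_heightOneSpectrum_factorization' K hz₀]
    · refine finprod_congr fun v ↦ ?_
      rw [hm, ← zpow_natCast, ← zpow_mul, mul_comm]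
    · refine (finite_factors (spanSingleton R⁰ (z : K))).subset fun v hv hv₀ ↦ hv ?_
      have hmv : m v = 0 := by simpa [hn, hv₀.out] using hm v
      simp only [hmv, zpow_zero]
  refine ⟨Units.mk0 _ (ne_zero_pow hn (hprod ▸ hz₀)), ?_⟩
  ext1
  rw [Units.val_pow_eq_pow_val, Units.val_mk0, hprod, coe_toPrincipalIdeal]

omit [IsDedekindDomain R] in
lemma ker_toPrincipalIdeal_le :
    (toPrincipalIdeal R K).ker ≤ (Units.map (algebraMap R K : R →* K)).range := by
  have hmem {z : Kˣ} (hz : z ∈ (toPrincipalIdeal R K).ker) : ∃ r : R, algebraMap R K r = z := by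
    have hspan : spanSingleton R⁰ (z : K) = 1 := by
      rw [← coe_toPrincipalIdeal, hz, Units.val_one]
    exact (mem_one_iff R⁰).mp (hspan ▸ mem_spanSingleton_self R⁰ (z : K))
  intro z hz
  obtain ⟨r, hr⟩ := hmem hz
  obtain ⟨s, hs⟩ := hmem (inv_mem hz)
  have hrs : r * s = 1 := IsFractionRing.injective R K (by rw [map_mul, hr, hs, map_one, z.mul_inv])
  exact ⟨⟨r, s, hrs, by rw [mul_comm, hrs]⟩, Units.ext hr⟩

variable (R K)

lemma relIndex_powers_sup_ker_ne_zero [Finite (ClassGroup R)] {n : ℕ} (hn : n ≠ 0) :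
    (powers Kˣ n ⊔ (toPrincipalIdeal R K).ker).relIndex (selmerSubgroup (R := R) K ∅ n) ≠ 0 := by
  have : Finite ((FractionalIdeal R⁰ K)ˣ ⧸ (toPrincipalIdeal R K).range) :=
    Finite.of_equiv _ (ClassGroup.equiv K).toEquiv
  have : (toPrincipalIdeal R K).range.FiniteIndex := Subgroup.finiteIndex_of_finite_quotient
  have hindex : ((powers Kˣ n).map (toPrincipalIdeal R K)).relIndex (powers _ n) ≠ 0 := by
    have hmap : (powers Kˣ n).map (toPrincipalIdeal R K)
        = (toPrincipalIdeal R K).range.map (powMonoidHom n) := by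
      simp only [MonoidHom.range_eq_map, Subgroup.map_map]
      congr 1
      ext1 z
      simp
    rw [hmap, powers, (powMonoidHom n : (FractionalIdeal R⁰ K)ˣ →* _).range_eq_map,
      Subgroup.relIndex_map_map]
    exact mt (Subgroup.relIndex_eq_zero_of_le_left le_sup_left)
      (mt Subgroup.index_eq_zero_of_relIndex_eq_zero Subgroup.FiniteIndex.index_ne_zero)
  have hle : selmerSubgroup (R := R) K ∅ n ≤ (powers _ n).comap (toPrincipalIdeal R K) :=
    fun z hz ↦ exists_pow_eq_toPrincipalIdeal hn hz
  rw [← Subgroup.comap_map_eq]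
  exact mt (Subgroup.relIndex_eq_zero_of_le_right hle)
    (Subgroup.relIndex_comap_ne_zero _ hindex)

omit [IsDedekindDomain R] in
lemma relIndex_powers_ne_zero [Group.FG Rˣ] {n : ℕ} (hn : n ≠ 0) :
    (powers Kˣ n).relIndex (powers Kˣ n ⊔ (toPrincipalIdeal R K).ker) ≠ 0 := by
  have hpow := Subgroup.finiteIndex_range_powMonoidHom_of_fg Rˣ hn
  have hle : powers Rˣ n ≤ (powers Kˣ n).comap (Units.map (algebraMap R K : R →* K)) := by
    rintro _ ⟨u, rfl⟩
    exact ⟨Units.map (algebraMap R K : R →* K) u, by simp⟩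
  have := Subgroup.finiteIndex_of_le hle
  rw [Subgroup.relIndex_sup_left]
  refine mt (Subgroup.relIndex_eq_zero_of_le_right ker_toPrincipalIdeal_le) ?_
  rw [← Subgroup.index_comap]
  exact Subgroup.FiniteIndex.index_ne_zero

variable {R}

theorem relIndex_powers_selmerSubgroup_ne_zero [Finite (ClassGroup R)] [Group.FG Rˣ]
    {S : Set (HeightOneSpectrum R)} (hS : S.Finite) {n : ℕ} (hn : n ≠ 0) :
    (powers Kˣ n).relIndex (selmerSubgroup K S n) ≠ 0 :=
  Subgroup.relIndex_ne_zero_trans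
    (Subgroup.relIndex_ne_zero_trans (relIndex_powers_ne_zero R K hn)
      (relIndex_powers_sup_ker_ne_zero R K hn))
    (relIndex_selmerSubgroup_empty_ne_zero K hS hn)

end Selmer

/-! ### Square classes of `x - θ` -/

section SquareClass

open IsDedekindDomain NumberField

/-- The class of a unit of a commutative monoid modulo squares; junk value `1` at non-units. -/
noncomputable def squareClass {M : Type*} [CommMonoid M] (z : M) : Mˣ ⧸ powers Mˣ 2 :=
  open Classical in if hz : IsUnit z then QuotientGroup.mk hz.unit else 1

lemma isSquare_mul_of_squareClass_eq {M : Type*} [CommMonoid M] {z w : M} (hz : IsUnit z)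
    (hw : IsUnit w) (h : squareClass z = squareClass w) : IsSquare (z * w) := by
  obtain ⟨z, rfl⟩ := hz
  obtain ⟨w, rfl⟩ := hw
  rw [squareClass, squareClass, dif_pos z.isUnit, dif_pos w.isUnit, QuotientGroup.eq] at h
  obtain ⟨s, hs⟩ := h
  have hzw : z * w = (s * z) ^ 2 := by
    rw [mul_pow, ← powMonoidHom_apply 2 s, hs, z.isUnit.unit_of_val_units,
      w.isUnit.unit_of_val_units]
    simp [sq, mul_left_comm, mul_comm]
  exact ⟨s * z, by simpa [sq] using congrArg Units.val hzw⟩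

lemma squareClass_mem_map {K : Type*} [Field K] {H : Subgroup Kˣ} {z : K} (hz : z ≠ 0)
    (h : Units.mk0 z hz ∈ H) : squareClass z ∈ H.map (QuotientGroup.mk' (powers Kˣ 2)) := by
  rw [squareClass, dif_pos (isUnit_iff_ne_zero.mpr hz)]
  exact ⟨_, h, congrArg _ (Units.ext rfl)⟩

lemma valuation_sub_eq_sq {K Γ₀ : Type*} [Field K] [LinearOrderedCommGroupWithZero Γ₀]
    (v : Valuation K Γ₀) {a b θ x y : K} (hθ : v θ ≤ 1) (ha : v a ≤ 1)
    (hd : 1 ≤ v (3 * θ ^ 2 + a)) (hroot : θ ^ 3 + a * θ + b = 0) (h : OnCubic a b x y) :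
    ∃ w, v (x - θ) = w ^ 2 := by
  have hmul : v y ^ 2 = v (x - θ) * v (x ^ 2 + (θ * x + (θ ^ 2 + a))) := by
    rw [← map_pow, ← map_mul]
    congr 1
    linear_combination h + hroot
  rcases le_or_gt (v x) 1 with hx | hx
  · rcases (v.map_sub_le hx hθ).eq_or_lt with hsub | hsub
    · exact ⟨1, by rw [hsub, one_pow]⟩
    have hθ' : θ ∈ v.integer := hθ
    have hx' : x ∈ v.integer := hx
    have hle : v (3 * θ ^ 2 + a) ≤ 1 :=
      add_mem (mul_mem (ofNat_mem v.integer 3) (pow_mem hθ' 2)) (show a ∈ v.integer from ha)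
    have hlt : v ((x - θ) * (x + 2 * θ)) < v (3 * θ ^ 2 + a) := by
      rw [map_mul]
      exact (mul_lt_one_of_lt_of_le hsub
        (add_mem hx' (mul_mem (ofNat_mem v.integer 2) hθ'))).trans_le hd
    have hone : v (x ^ 2 + (θ * x + (θ ^ 2 + a))) = 1 := by
      rw [show x ^ 2 + (θ * x + (θ ^ 2 + a)) = (x - θ) * (x + 2 * θ) + (3 * θ ^ 2 + a) by ring,
        v.map_add_eq_of_lt_right hlt, le_antisymm hle hd]
    exact ⟨v y, by rw [hmul, hone, mul_one]⟩
  · have hx₀ : 0 < v x := zero_lt_one.trans hx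
    have hsub : v (x - θ) = v x := v.map_sub_eq_of_lt_left (hθ.trans_lt hx)
    have hlt : v (θ * x + (θ ^ 2 + a)) < v (x ^ 2) := by
      rw [map_pow, sq (v x)]
      refine (v.map_add _ _).trans_lt (max_lt ?_ ?_)
      · rw [map_mul]
        exact mul_lt_mul_of_pos_right (hθ.trans_lt hx) hx₀
      · have hθ' : θ ∈ v.integer := hθ
        exact (add_mem (pow_mem hθ' 2) (show a ∈ v.integer from ha) :
          θ ^ 2 + a ∈ v.integer).trans_lt (one_lt_mul'' hx hx)
    rw [hsub, v.map_add_eq_of_lt_left hlt, map_pow] at hmul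
    refine ⟨v y / v x, ?_⟩
    rw [hsub, div_pow, hmul, mul_div_cancel_right₀ _ (pow_ne_zero 2 hx₀.ne')]

lemma mk0_mem_selmerSubgroup {R K : Type*} [CommRing R] [IsDedekindDomain R] [Field K]
    [Algebra R K] [IsFractionRing R K] {S : Set (HeightOneSpectrum R)} {n : ℕ} {z : K}
    (hz : z ≠ 0) (h : ∀ v ∉ S, ∃ w, v.valuation K z = w ^ n) (hn : n ≠ 0) :
    Units.mk0 z hz ∈ selmerSubgroup K S n := by
  refine mem_selmerSubgroup.mpr fun v hv ↦ ?_
  obtain ⟨w, hw⟩ := h v hv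
  have hw₀ : w ≠ 0 := by
    rintro rfl
    rw [zero_pow hn, map_eq_zero] at hw
    exact hz hw
  refine ⟨WithZero.unzero hw₀, ?_⟩
  rw [← WithZero.coe_inj, HeightOneSpectrum.valuationOfNeZero_eq, Units.val_mk0, hw]
  simp

lemma deriv_ne_zero_of_root {K : Type*} [Field K] {a b θ : K} (hroot : θ ^ 3 + a * θ + b = 0)
    (hd : 4 * a ^ 3 + 27 * b ^ 2 ≠ 0) : 3 * θ ^ 2 + a ≠ 0 := fun h ↦ hd <| by
  linear_combination
    (-18 * a * θ + 27 * b) * hroot + (6 * a * θ ^ 2 - 9 * b * θ + 4 * a ^ 2) * h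

lemma sub_ne_zero_of_onCubic {K : Type*} [Field K] {a b θ x y : K}
    (hroot : θ ^ 3 + a * θ + b = 0) (h : OnCubic a b x y) (hy : y ≠ 0) : x - θ ≠ 0 :=
  fun hx ↦ hy <| sq_eq_zero_iff.mp <| by
    rw [sub_eq_zero.mp hx, OnCubic, hroot] at h
    exact h

lemma finite_squareClass_sub {K : Type*} [Field K] [NumberField K] {a b θ : K}
    (hroot : θ ^ 3 + a * θ + b = 0) (hd : 4 * a ^ 3 + 27 * b ^ 2 ≠ 0) :
    {c | ∃ x y, OnCubic a b x y ∧ y ≠ 0 ∧ squareClass (x - θ) = c}.Finite := by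
  have hderiv := deriv_ne_zero_of_root hroot hd
  let S : Set (HeightOneSpectrum (𝓞 K)) := HeightOneSpectrum.Support (𝓞 K) θ ∪
    HeightOneSpectrum.Support (𝓞 K) a ∪ HeightOneSpectrum.Support (𝓞 K) (3 * θ ^ 2 + a)⁻¹
  have hS : S.Finite := ((HeightOneSpectrum.Support.finite _ _).union
    (HeightOneSpectrum.Support.finite _ _)).union (HeightOneSpectrum.Support.finite _ _)
  have : Group.FG (𝓞 K)ˣ := Group.fg_iff_monoid_fg.mpr inferInstance
  have hindex := relIndex_powers_selmerSubgroup_ne_zero K hS two_ne_zero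
  rw [← QuotientGroup.ker_mk' (powers Kˣ 2), Subgroup.relIndex_ker] at hindex
  have := (Nat.card_ne_zero.mp hindex).2
  let H := (selmerSubgroup K S 2).map (QuotientGroup.mk' (powers Kˣ 2))
  refine (Set.toFinite (H : Set (Kˣ ⧸ powers Kˣ 2))).subset ?_
  rintro _ ⟨x, y, h, hy, rfl⟩
  refine squareClass_mem_map (sub_ne_zero_of_onCubic hroot h hy)
    (mk0_mem_selmerSubgroup _ (fun v hv ↦ ?_) two_ne_zero)
  simp only [S, HeightOneSpectrum.Support, Set.mem_union, Set.mem_ofPred_eq, not_or, not_lt,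
    map_inv₀] at hv
  have hpos : 0 < v.valuation K (3 * θ ^ 2 + a) := by simpa [zero_lt_iff] using hderiv
  exact valuation_sub_eq_sq _ hv.1.1 hv.1.2 ((inv_le_one₀ hpos).mp hv.2) hroot h

lemma isSquare_mul_mul_of_isChordX {K : Type*} [Field K] {a b θ x y x' y' x₃ : K}
    (hroot : θ ^ 3 + a * θ + b = 0) (h : OnCubic a b x y) (h' : OnCubic a b x' y')
    (hx : x ≠ x') (h₃ : IsChordX x y x' y' x₃) :
    IsSquare ((x - θ) * (x' - θ) * (x₃ - θ)) := by
  have hne := sub_ne_zero.mpr hx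
  obtain ⟨l, hl⟩ : ∃ l, l * (x - x') = y - y' := ⟨_, div_mul_cancel₀ _ hne⟩
  have hx₃ : x₃ = l ^ 2 - x - x' := mul_right_cancel₀ (pow_ne_zero 2 hne) <| by
    linear_combination h₃ hx - (l * (x - x') + (y - y')) * hl
  have hsum : l * (y + y') = x ^ 2 + x * x' + x' ^ 2 + a := mul_left_cancel₀ hne <| by
    linear_combination (y + y') * hl + h - h'
  refine ⟨l * (θ - x) + y, ?_⟩
  linear_combination (x - θ) * (x' - θ) * hx₃ - hroot + (θ - x) * (l * hl - hsum) - h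

end SquareClass

/-! ### Weak Mordell–Weil -/

section Halving

open Polynomial

lemma exists_dvd_sub_sq_of_squarefree {R : Type*} [CommRing R] [IsDomain R]
    [IsPrincipalIdealRing R] (c : R) {f : R} (hf : Squarefree f)
    (h : ∀ p, Irreducible p → p ∣ f → ∃ g, p ∣ c - g ^ 2) : ∃ g, f ∣ c - g ^ 2 := by
  induction f using UniqueFactorizationMonoid.induction_on_prime with
  | h₁ => exact absurd hf not_squarefree_zero
  | h₂ x hx => exact ⟨0, hx.dvd⟩
  | h₃ f p _ hp ih =>
    obtain ⟨g, hg⟩ := ih (hf.squarefree_of_dvd (dvd_mul_left f p))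
      fun q hq hqf ↦ h q hq (hqf.mul_left p)
    obtain ⟨g', hg'⟩ := h p hp.irreducible (dvd_mul_right p f)
    have hcop : IsCoprime p f := by
      rw [hp.irreducible.coprime_iff_not_dvd]
      exact fun hpf ↦ hp.not_isUnit (hf p (mul_dvd_mul_left p hpf))
    obtain ⟨k, hk, hk'⟩ : ∃ k, f ∣ k - g ∧ p ∣ k - g' := by
      obtain ⟨u, v, huv⟩ := hcop
      refine ⟨g * (u * p) + g' * (v * f), ⟨v * (g' - g), ?_⟩, ⟨u * (g - g'), ?_⟩⟩
      · linear_combination g * huv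
      · linear_combination g' * huv
    have hsq {q m : R} (hm : q ∣ c - m ^ 2) (hkm : q ∣ k - m) : q ∣ c - k ^ 2 := by
      rw [show c - k ^ 2 = c - m ^ 2 - (k - m) * (k + m) by ring]
      exact dvd_sub hm (hkm.mul_right _)
    exact ⟨k, hcop.mul_dvd (hsq hg' hk') (hsq hg hk)⟩

/-- The cubic polynomial `X³ + aX + b`. -/
noncomputable def shortCubic {F : Type*} [Field F] (a b : F) : F[X] := X ^ 3 + C a * X + C b

variable {F : Type*} [Field F] {a b : F}

variable (a b) in
lemma monic_shortCubic : (shortCubic a b).Monic := by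
  unfold shortCubic
  monicity!

variable (a b) in
lemma natDegree_shortCubic : (shortCubic a b).natDegree = 3 := by
  unfold shortCubic
  compute_degree!

lemma squarefree_shortCubic (hd : 4 * a ^ 3 + 27 * b ^ 2 ≠ 0) : Squarefree (shortCubic a b) := by
  set δ := 4 * a ^ 3 + 27 * b ^ 2 with hδ
  have hderiv : derivative (shortCubic a b) = 3 * X ^ 2 + C a := by
    simp [shortCubic, show (C 2 : F[X]) + 1 = 3 by rw [C_ofNat]; norm_num]
  have hunit : C δ⁻¹ * (4 * C a ^ 3 + 27 * C b ^ 2) = 1 := by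
    rw [← C_1, ← inv_mul_cancel₀ hd, C_mul, hδ]
    simp only [C_add, C_mul, C_pow, C_ofNat]
  refine Separable.squarefree ⟨C δ⁻¹ * (-18 * C a * X + 27 * C b),
    C δ⁻¹ * (6 * C a * X ^ 2 - 9 * C b * X + 4 * C a ^ 2), ?_⟩
  rw [hderiv, shortCubic]
  linear_combination hunit

lemma exists_quadratic_dvd_sub_sq {c g : F[X]} (hg : shortCubic a b ∣ c - g ^ 2) :
    ∃ u v w : F, shortCubic a b ∣ c - (C u + C v * X + C w * X ^ 2) ^ 2 := by
  set r := g %ₘ shortCubic a b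
  have hdvd : shortCubic a b ∣ c - r ^ 2 := by
    have hmod := modByMonic_add_div g (shortCubic a b)
    rw [show c - r ^ 2 = c - g ^ 2 + shortCubic a b * (g /ₘ shortCubic a b * (g + r)) by
      linear_combination (-(g + r)) * hmod]
    exact dvd_add hg (dvd_mul_right _ _)
  have hdeg : r.natDegree < 3 := by
    rw [← natDegree_shortCubic a b]
    exact natDegree_modByMonic_lt g (monic_shortCubic a b) fun h ↦ by
      simpa [h] using natDegree_shortCubic a b
  refine ⟨r.coeff 0, r.coeff 1, r.coeff 2, ?_⟩
  convert hdvd using 3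
  rw [as_sum_range_C_mul_X_pow' r hdeg]
  simp [Finset.sum_range_succ]

lemma coeff_eq_zero_of_quadratic_eq_zero {p q r : F}
    (h : C p * X ^ 2 + C q * X + C r = (0 : F[X])) : p = 0 ∧ q = 0 ∧ r = 0 := by
  have hcoeff (n : ℕ) := congrArg (coeff · n) h
  exact ⟨by simpa [coeff_X, coeff_C] using hcoeff 2, by simpa [coeff_X, coeff_C] using hcoeff 1,
    by simpa using hcoeff 0⟩

lemma exists_coeffs_of_dvd_sub_sq {x : F} {g : F[X]} (hg : shortCubic a b ∣ C x - X - g ^ 2) :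
    ∃ u v w : F, x = u ^ 2 - 2 * v * w * b ∧ -1 = 2 * u * v - 2 * v * w * a - w ^ 2 * b ∧
      0 = v ^ 2 + 2 * u * w - w ^ 2 * a := by
  obtain ⟨u, v, w, hdvd⟩ := exists_quadratic_dvd_sub_sq hg
  have hred : C x - X - (C u + C v * X + C w * X ^ 2) ^ 2
      + shortCubic a b * (C (w ^ 2) * X + C (2 * v * w))
      = C (0 - (v ^ 2 + 2 * u * w - w ^ 2 * a)) * X ^ 2
        + C (-1 - (2 * u * v - 2 * v * w * a - w ^ 2 * b)) * X
        + C (x - (u ^ 2 - 2 * v * w * b)) := by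
    simp only [shortCubic, C_sub, C_mul, C_add, C_pow, C_neg, C_1, C_0, C_ofNat]
    ring
  have hzero := eq_zero_of_dvd_of_natDegree_lt (hred ▸ dvd_add hdvd (dvd_mul_right _ _)) <| by
    rw [natDegree_shortCubic]
    exact natDegree_quadratic_le.trans_lt (by norm_num)
  obtain ⟨hquad, hlin, hconst⟩ := coeff_eq_zero_of_quadratic_eq_zero hzero
  exact ⟨u, v, w, sub_eq_zero.mp hconst, sub_eq_zero.mp hlin, sub_eq_zero.mp hquad⟩

lemma exists_tangent_of_dvd_sub_sq [CharZero F] {x : F} {g : F[X]}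
    (hg : shortCubic a b ∣ C x - X - g ^ 2) :
    ∃ r s : F, s ≠ 0 ∧ OnCubic a b r s ∧ x * (4 * s ^ 2) = dblNum a b r := by
  obtain ⟨u, v, w, hx, hlin, hquad⟩ := exists_coeffs_of_dvd_sub_sq hg
  have hw : w ≠ 0 := by
    rintro rfl
    obtain rfl : v = 0 := by simpa using hquad.symm
    simp at hlin
  obtain ⟨r, rfl⟩ : ∃ r, v = r * w := ⟨v / w, (div_mul_cancel₀ v hw).symm⟩
  have hu : 2 * u = w * (a - r ^ 2) := mul_left_cancel₀ hw <| by linear_combination -hquad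
  have hr : w ^ 2 * (r ^ 3 + a * r + b) = 1 := by linear_combination hlin + r * w * hu
  have hcubic : OnCubic a b r w⁻¹ := by
    rw [OnCubic, inv_pow, inv_eq_of_mul_eq_one_right hr]
  refine ⟨r, w⁻¹, inv_ne_zero hw, hcubic, ?_⟩
  rw [hx, dblNum]
  field_simp
  linear_combination (2 * u + w * (a - r ^ 2)) * hu

variable {W : WeierstrassCurve F} {P : W.toAffine.Point}

lemma exists_add_self_eq_of_dvd_sub_sq [CharZero F] [DecidableEq F] [W.IsElliptic] (hP : P ≠ 0)
    {g : F[X]} (hg : shortCubic (shortA W) (shortB W) ∣ C (xCoord P) - X - g ^ 2) :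
    ∃ Q, Q + Q = P := by
  obtain ⟨r, s, hs, hrs, hx⟩ := exists_tangent_of_dvd_sub_sq hg
  obtain ⟨Q, hQ, rfl, rfl⟩ := exists_xCoord_yCoord_eq hrs
  have hQQ : Q + Q ≠ 0 := mt add_self_eq_zero_iff.mp hs
  have hxx : xCoord (Q + Q) = xCoord P :=
    mul_right_cancel₀ (mul_ne_zero (by norm_num) (pow_ne_zero 2 hs))
      ((xCoord_add_self_mul hQ hs).trans hx.symm)
  rcases eq_or_eq_neg_of_xCoord_eq hQQ hP hxx with h | h
  · exact ⟨Q, h⟩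
  · exact ⟨-Q, by rw [← neg_add, h, neg_neg]⟩

end Halving

section MordellWeil

open Polynomial UniqueFactorizationMonoid WeierstrassCurve

lemma finite_quotient_of_finite_image {G ι : Type*} [AddCommGroup G] {H : AddSubgroup G} {T : Set G}
    (hT : T.Finite) (f : G → ι) (hf : (f '' Tᶜ).Finite)
    (h : ∀ P ∉ T, ∀ Q ∉ T, f P = f Q → P - Q ∈ H) : Finite (G ⧸ H) := by
  obtain ⟨U, hU, hbij⟩ := Set.exists_subset_bijOn Tᶜ f
  have hcompl : ((QuotientAddGroup.mk : G → G ⧸ H) '' Tᶜ).Finite := by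
    refine ((hbij.finite_iff_finite.mpr hf).image QuotientAddGroup.mk).subset ?_
    rintro _ ⟨P, hP, rfl⟩
    obtain ⟨Q, hQ, hfQ⟩ := hbij.surjOn ⟨P, hP, rfl⟩
    refine ⟨Q, hQ, QuotientAddGroup.eq.mpr ?_⟩
    rw [neg_add_eq_sub]
    exact h P hP Q (hU hQ) hfQ.symm
  rw [← Set.finite_univ_iff, ← Set.range_eq_univ.mpr (QuotientAddGroup.mk_surjective (s := H)),
    ← Set.image_univ, ← Set.union_compl_self T, Set.image_union]
  exact (hT.image _).union hcompl

variable {a b : ℚ} {p : ℚ[X]}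

lemma numberField_adjoinRoot [Fact (Irreducible p)] : NumberField (AdjoinRoot p) where
  to_charZero := charZero_of_injective_algebraMap (algebraMap ℚ (AdjoinRoot p)).injective
  to_finiteDimensional :=
    (AdjoinRoot.powerBasis (Fact.out : Irreducible p).ne_zero).finite

lemma root_pow_three_add (hp : p ∣ shortCubic a b) :
    AdjoinRoot.root p ^ 3 + AdjoinRoot.of p a * AdjoinRoot.root p + AdjoinRoot.of p b = 0 := by
  simpa [shortCubic] using AdjoinRoot.mk_eq_zero.mpr hp

lemma onCubic_map {F K : Type*} [Field F] [Field K] (f : F →+* K) {a b x y : F}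
    (h : OnCubic a b x y) : OnCubic (f a) (f b) (f x) (f y) := by
  simpa using congrArg f h

lemma isChordX_map {F K : Type*} [Field F] [Field K] (f : F →+* K) {x y q r x₃ : F}
    (h : IsChordX x y q r x₃) : IsChordX (f x) (f y) (f q) (f r) (f x₃) := fun hne ↦ by
  simpa using congrArg f (h fun hx ↦ hne (congrArg f hx))

variable (W : WeierstrassCurve ℚ)

/-- The 2-descent map: the square classes of `x - θ` in the fields `ℚ(θ)`, for `θ` running through
the roots of the cubic up to conjugation. -/
noncomputable def descentMap (P : W.toAffine.Point)
    (p : {p // p ∈ normalizedFactors (shortCubic (shortA W) (shortB W))}) :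
    (AdjoinRoot p.1)ˣ ⧸ powers (AdjoinRoot p.1)ˣ 2 :=
  squareClass (AdjoinRoot.of p.1 (xCoord P) - AdjoinRoot.root p.1)

variable {W} in
lemma ne_zero_of_yCoord_ne_zero {P : W.toAffine.Point} (hy : yCoord P ≠ 0) : P ≠ 0 := by
  rintro rfl
  exact hy rfl

variable {W} in
lemma exists_dvd_sub_sq_of_descentMap_eq {P Q : W.toAffine.Point} (hP : yCoord P ≠ 0)
    (hQ : yCoord Q ≠ 0) (hx : xCoord P ≠ xCoord Q) (h : descentMap W P = descentMap W Q)
    (p : ℚ[X]) (hp : p ∈ normalizedFactors (shortCubic (shortA W) (shortB W))) :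
    ∃ g, p ∣ C (xCoord (P - Q)) - X - g ^ 2 := by
  have : Fact (Irreducible p) := ⟨irreducible_of_normalized_factor _ hp⟩
  have hroot := root_pow_three_add (dvd_of_mem_normalizedFactors hp)
  have hP₀ := ne_zero_of_yCoord_ne_zero hP
  have hQ₀ := ne_zero_of_yCoord_ne_zero hQ
  set f := AdjoinRoot.of p
  set θ := AdjoinRoot.root p
  have hcP := onCubic_map f (onCubic hP₀)
  have hcQ := onCubic_map f (onCubic hQ₀)
  have hunitP := sub_ne_zero_of_onCubic hroot hcP ((map_ne_zero f).mpr hP)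
  have hunitQ := sub_ne_zero_of_onCubic hroot hcQ ((map_ne_zero f).mpr hQ)
  have hprod : IsSquare ((f (xCoord P) - θ) * (f (xCoord Q) - θ)) :=
    isSquare_mul_of_squareClass_eq hunitP.isUnit hunitQ.isUnit (congrFun h ⟨p, hp⟩)
  have hcQ' := onCubic_map f (onCubic (neg_ne_zero.mpr hQ₀))
  have hchord := isChordX_map f (isChordX_add hP₀ (neg_ne_zero.mpr hQ₀))
  rw [← sub_eq_add_neg, xCoord_neg] at hchord
  rw [xCoord_neg] at hcQ'
  have htriple := isSquare_mul_mul_of_isChordX hroot hcP hcQ' (f.injective.ne hx) hchord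
  obtain ⟨s, hs⟩ : IsSquare (f (xCoord (P - Q)) - θ) := by
    have := htriple.div hprod
    rwa [mul_div_cancel_left₀ _ (mul_ne_zero hunitP hunitQ)] at this
  obtain ⟨g, rfl⟩ := AdjoinRoot.mk_surjective s
  refine ⟨g, AdjoinRoot.mk_eq_zero.mp ?_⟩
  rw [map_sub, map_sub, AdjoinRoot.mk_C, AdjoinRoot.mk_X, hs, map_pow, sq, sub_self]

variable [W.IsElliptic]

lemma finite_image_descentMap : (descentMap W '' {P | yCoord P = 0}ᶜ).Finite := by
  have hfin (p : {p // p ∈ normalizedFactors (shortCubic (shortA W) (shortB W))}) :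
      {c | ∃ P : W.toAffine.Point, yCoord P ≠ 0 ∧ descentMap W P p = c}.Finite := by
    have : Fact (Irreducible p.1) := ⟨irreducible_of_normalized_factor _ p.2⟩
    have := numberField_adjoinRoot (p := p.1)
    have hd : 4 * AdjoinRoot.of p.1 (shortA W) ^ 3 + 27 * AdjoinRoot.of p.1 (shortB W) ^ 2 ≠ 0 := by
      simpa [shortDisc] using (map_ne_zero (AdjoinRoot.of p.1)).mpr (shortDisc_ne_zero W)
    refine (finite_squareClass_sub (root_pow_three_add (dvd_of_mem_normalizedFactors p.2))
      hd).subset ?_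
    rintro _ ⟨P, hP, rfl⟩
    exact ⟨_, _, onCubic_map (AdjoinRoot.of p.1) (onCubic (ne_zero_of_yCoord_ne_zero hP)),
      (map_ne_zero (AdjoinRoot.of p.1)).mpr hP, rfl⟩
  refine (Set.Finite.pi' hfin).subset ?_
  rintro _ ⟨P, hP, rfl⟩ p
  exact ⟨P, hP, rfl⟩

variable {W} in
lemma sub_mem_range_nsmul_two_of_descentMap_eq {P Q : W.toAffine.Point} (hP : yCoord P ≠ 0)
    (hQ : yCoord Q ≠ 0) (h : descentMap W P = descentMap W Q) :
    P - Q ∈ (nsmulAddMonoidHom 2 : W.toAffine.Point →+ _).range := by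
  by_cases hx : xCoord P = xCoord Q
  · rcases eq_or_eq_neg_of_xCoord_eq (ne_zero_of_yCoord_ne_zero hP)
      (ne_zero_of_yCoord_ne_zero hQ) hx with rfl | rfl
    · exact ⟨0, by simp⟩
    · exact ⟨-Q, by simp [two_nsmul, sub_eq_add_neg]⟩
  obtain ⟨g, hg⟩ := exists_dvd_sub_sq_of_squarefree (C (xCoord (P - Q)) - X)
    (squarefree_shortCubic (shortDisc_ne_zero W)) fun q hq hdvd ↦ by
      obtain ⟨p, hp, hqp⟩ :=
        exists_mem_normalizedFactors_of_dvd (monic_shortCubic _ _).ne_zero hq hdvd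
      obtain ⟨g, hg⟩ := exists_dvd_sub_sq_of_descentMap_eq hP hQ hx h p hp
      exact ⟨g, hqp.dvd.trans hg⟩
  obtain ⟨R, hR⟩ := exists_add_self_eq_of_dvd_sub_sq
    (sub_ne_zero.mpr fun hPQ ↦ hx (congrArg xCoord hPQ)) hg
  exact ⟨R, by simpa [two_nsmul] using hR⟩

lemma northcott_height : Northcott (height W) where
  finite_le t := by
    by_contra hinf
    obtain ⟨s, hs, hcard⟩ :=
      Set.Infinite.exists_subset_card_eq hinf (⌊100 * Real.exp (12 * max t 0)⌋₊ + 1)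
    have hle := card_le_of_height_le (le_max_right t 0)
      fun P hP ↦ (Set.mem_ofPred.mp (hs hP)).trans (le_max_left t 0)
    have hlt := Nat.lt_floor_add_one (100 * Real.exp (12 * max t 0))
    rw [hcard] at hle
    push_cast at hle
    linarith

lemma finite_yCoord_eq_zero : {P : W.toAffine.Point | yCoord P = 0}.Finite := by
  have := northcott_height W
  refine (Northcott.finite_le (h := height W) (50 * heightError W.j)).subset fun P hP ↦ ?_
  have hle := le_height_add_self P
  rw [add_self_eq_zero_iff.mpr hP, height_zero] at hle
  rw [Set.mem_ofPred]
  linarith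

theorem finiteIndex_range_nsmul_two :
    (nsmulAddMonoidHom 2 : W.toAffine.Point →+ _).range.FiniteIndex := by
  have := finite_quotient_of_finite_image (finite_yCoord_eq_zero W) (descentMap W)
    (finite_image_descentMap W) fun P hP Q hQ ↦ sub_mem_range_nsmul_two_of_descentMap_eq hP hQ
  exact AddSubgroup.finiteIndex_of_finite_quotient

theorem addGroup_fg : AddGroup.FG W.toAffine.Point := by
  have := northcott_height W
  refine AddCommGroup.fg_of_descent (n := 2) (h := height W) (a := 3) (b := 4)
    (c₀ := 200 * heightError W.j) (c := fun P ↦ 3 * height W P + 200 * heightError W.j)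
    (by norm_num) (by norm_num) (finiteIndex_range_nsmul_two W) (fun P Q ↦ ?_) fun P ↦ ?_
  · have hle := height_add_le (P + Q) (-P)
    rw [height_neg, add_neg_cancel_comm] at hle
    linarith
  · rw [two_nsmul]
    linarith [le_height_add_self P]

end MordellWeil

/-! ### Packing in finitely generated groups with a height -/

section Index

variable {Γ : Type*} [AddCommGroup Γ]

lemma le_grpRank_of_surjective [AddGroup.FG Γ] {n : ℕ} {φ : Γ →+ Fin n → ℤ}
    (hφ : Function.Surjective φ) : n ≤ grpRank Γ := by
  have : Module.Finite ℤ Γ := Module.Finite.iff_addGroup_fg.mpr inferInstance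
  have h := LinearMap.finrank_le_finrank_of_surjective (f := φ.toIntLinearMap.baseChange ℚ)
    (LinearMap.lTensor_surjective ℚ hφ)
  rwa [Module.finrank_baseChange, Module.finrank_fin_fun] at h

variable (Γ) in
lemma exists_addEquiv_pi_prod [AddGroup.FG Γ] :
    ∃ (n : ℕ) (T : Type) (_ : AddCommGroup T), Finite T ∧ n ≤ grpRank Γ ∧
      Nonempty (Γ ≃+ (Fin n → ℤ) × T) := by
  classical
  obtain ⟨n, ι, _, p, hp, e, ⟨f⟩⟩ := AddCommGroup.equiv_free_prod_directSum_zmod Γ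
  have (i : ι) : NeZero (p i ^ e i) := ⟨pow_ne_zero _ (hp i).ne_zero⟩
  let g := f.trans ((Finsupp.linearEquivFunOnFinite ℤ ℤ (Fin n)).toAddEquiv.prodCongr (.refl _))
  refine ⟨n, _, inferInstance, ?_,
    le_grpRank_of_surjective (φ := (AddMonoidHom.fst _ _).comp g.toAddMonoidHom) ?_, ⟨g⟩⟩
  · exact Finite.of_injective (fun q i ↦ q i) DFunLike.coe_injective
  · exact Prod.fst_surjective.comp g.surjective

lemma index_range_nsmul_le {n : ℕ} {T : Type*} [AddCommGroup T] [Finite T]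
    (f : Γ ≃+ (Fin n → ℤ) × T) {m : ℕ} (hm : m ≠ 0) :
    (nsmulAddMonoidHom (α := Γ) m).range.index ≠ 0 ∧
      (nsmulAddMonoidHom (α := Γ) m).range.index ≤ Nat.card T * m ^ n := by
  have : NeZero m := ⟨hm⟩
  let θ : Γ →+ (Fin n → ZMod m) × T :=
    (((Int.castAddHom (ZMod m)).compLeft (Fin n)).prodMap (.id T)).comp f.toAddMonoidHom
  have hker : θ.ker ≤ (nsmulAddMonoidHom (α := Γ) m).range := by
    intro g hg
    have hθ : θ g = 0 := hg
    have hfree (i : Fin n) : (((f g).1 i : ℤ) : ZMod m) = 0 := congrFun (congrArg Prod.fst hθ) i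
    have htors : (f g).2 = 0 := congrArg Prod.snd hθ
    choose c hc using fun i ↦ (ZMod.intCast_zmod_eq_zero_iff_dvd _ _).mp (hfree i)
    refine ⟨f.symm (c, 0), f.injective (Prod.ext ?_ ?_)⟩
    · ext i
      simp [hc]
    · simp [htors]
  have hpos : 0 < θ.ker.index := by
    rw [AddSubgroup.index_ker]
    exact Nat.card_pos
  have hcard : θ.ker.index ≤ Nat.card T * m ^ n :=
    calc θ.ker.index = Nat.card θ.range := AddSubgroup.index_ker θ
      _ ≤ Nat.card ((Fin n → ZMod m) × T) := Finite.card_subtype_le _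
      _ = Nat.card T * m ^ n := by simp [Nat.card_prod, mul_comm]
  have hdvd := AddSubgroup.index_dvd_of_le hker
  exact ⟨ne_zero_of_dvd_ne_zero hpos.ne' hdvd, (Nat.le_of_dvd hpos hdvd).trans hcard⟩

variable (Γ) in
lemma exists_index_range_nsmul_le [AddGroup.FG Γ] :
    ∃ κ : ℕ, ∀ m : ℕ, m ≠ 0 → (nsmulAddMonoidHom (α := Γ) m).range.index ≠ 0 ∧
      (nsmulAddMonoidHom (α := Γ) m).range.index ≤ κ * m ^ grpRank Γ := by
  obtain ⟨n, T, _, _, hn, ⟨f⟩⟩ := exists_addEquiv_pi_prod Γ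
  refine ⟨Nat.card T, fun m hm ↦ (index_range_nsmul_le f hm).imp_right fun h ↦ h.trans ?_⟩
  gcongr
  exact Nat.pos_of_ne_zero hm

lemma card_le_index_mul_of_card_le {G : AddSubgroup Γ} (hG : G.index ≠ 0) {B : Finset Γ} {C : ℝ}
    (hC : 0 ≤ C) (hB : ∀ e₀ ∈ B, ∀ t ⊆ B, (∀ e ∈ t, e - e₀ ∈ G) → (t.card : ℝ) ≤ C) :
    (B.card : ℝ) ≤ G.index * C := by
  classical
  have : Fintype (Γ ⧸ G) := AddSubgroup.fintypeOfIndexNeZero hG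
  let fibre (z : Γ ⧸ G) : Finset Γ := B.filter fun e ↦ QuotientAddGroup.mk e = z
  have hfibre (z : Γ ⧸ G) : ((fibre z).card : ℝ) ≤ C := by
    rcases (fibre z).eq_empty_or_nonempty with hempty | ⟨e₀, he₀⟩
    · simpa [hempty] using hC
    · obtain ⟨he₀B, rfl⟩ := Finset.mem_filter.mp he₀
      refine hB e₀ he₀B _ (Finset.filter_subset _ _) fun e he ↦ ?_
      rw [← QuotientAddGroup.eq_iff_sub_mem]
      exact (Finset.mem_filter.mp he).2
  have hsum : B.card = ∑ z : Γ ⧸ G, (fibre z).card :=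
    Finset.card_eq_sum_card_fiberwise fun _ _ ↦ Finset.mem_univ _
  calc (B.card : ℝ) = ∑ z : Γ ⧸ G, ((fibre z).card : ℝ) := by
        rw [hsum]; push_cast; rfl
    _ ≤ ∑ _z : Γ ⧸ G, C := Finset.sum_le_sum fun z _ ↦ hfibre z
    _ = G.index * C := by
        rw [Finset.sum_const, Finset.card_univ, nsmul_eq_mul, AddSubgroup.index_eq_card,
          Nat.card_eq_fintype_card]

end Index

section Packing

/-- A height on an abelian group: a function that is quadratic under doubling up to an error `A`,
with a weak parallelogram inequality and an explicit Northcott property. -/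
structure IsHeight {Γ : Type*} [AddCommGroup Γ] (h : Γ → ℝ) (A : ℝ) : Prop where
  map_zero : h 0 = 0
  map_neg : ∀ P, h (-P) = h P
  add_self_le : ∀ P, h (P + P) ≤ 4 * h P + A
  le_add_self : ∀ P, 4 * h P ≤ h (P + P) + A
  add_le : ∀ P Q, h (P + Q) ≤ 3 * h P + 3 * h Q + A
  card_le : ∀ (s : Finset Γ) (t : ℝ), 0 ≤ t → (∀ P ∈ s, h P ≤ t) →
    (s.card : ℝ) ≤ 100 * Real.exp (12 * t)

lemma isHeight_height (W : WeierstrassCurve ℚ) [W.IsElliptic] :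
    IsHeight (height W) (200 * heightError W.j) where
  map_zero := height_zero
  map_neg := height_neg
  add_self_le := height_add_self_le
  le_add_self := le_height_add_self
  add_le := height_add_le
  card_le _ _ := card_le_of_height_le

namespace IsHeight

variable {Γ : Type*} [AddCommGroup Γ] {h : Γ → ℝ} {A : ℝ} (hh : IsHeight h A)

include hh

lemma error_nonneg : 0 ≤ A := by simpa [hh.map_zero] using hh.add_self_le 0

lemma sub_le (P Q : Γ) : h (P - Q) ≤ 3 * h P + 3 * h Q + A := by
  rw [sub_eq_add_neg, ← hh.map_neg Q]
  exact hh.add_le _ _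

lemma map_sub_comm (P Q : Γ) : h (P - Q) = h (Q - P) := by rw [← hh.map_neg, neg_sub]

lemma two_pow_nsmul_le (k : ℕ) (P : Γ) : h (2 ^ k • P) ≤ (4 : ℝ) ^ k * (h P + A) - A := by
  induction k with
  | zero => simp
  | succ k ih =>
    have hdbl := hh.add_self_le (2 ^ k • P)
    rw [← two_nsmul, ← mul_nsmul, ← pow_succ] at hdbl
    rw [pow_succ (4 : ℝ)]
    linarith [hh.error_nonneg]

lemma le_two_pow_nsmul (k : ℕ) (P : Γ) : (4 : ℝ) ^ k * (h P - A) + A ≤ h (2 ^ k • P) := by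
  induction k with
  | zero => simp
  | succ k ih =>
    have hdbl := hh.le_add_self (2 ^ k • P)
    rw [← two_nsmul, ← mul_nsmul, ← pow_succ] at hdbl
    rw [pow_succ (4 : ℝ)]
    linarith [hh.error_nonneg]

section Separated

variable {ρ R : ℝ} {i : ℕ} {s : Finset Γ}

lemma injOn_add_two_pow_nsmul {k : ℕ} {B : Finset Γ} (hρ : 0 < ρ) (hA : 4 * A ≤ ρ)
    (hB : ∀ e ∈ B, h e ≤ (4 : ℝ) ^ k * ρ / 20)
    (hsep : (s : Set Γ).Pairwise fun p q ↦ ρ < h (p - q)) :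
    Set.InjOn (fun z : Γ × Γ ↦ z.1 + 2 ^ k • z.2) (B ×ˢ s : Finset (Γ × Γ)) := by
  rintro ⟨e, p⟩ hep ⟨e', p'⟩ hep' heq
  simp only [Finset.coe_product, Set.mem_prod, Finset.mem_coe] at hep hep' heq
  obtain rfl : p = p' := by
    by_contra hne
    have hpow : (1 : ℝ) ≤ 4 ^ k := one_le_pow₀ (by norm_num)
    have hdiff : 2 ^ k • (p - p') = e' - e := by
      rw [nsmul_sub, sub_eq_sub_iff_add_eq_add, add_comm, heq, add_comm]
    have hlower := hdiff ▸ hh.le_two_pow_nsmul k (p - p')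
    have hupper := hh.sub_le e' e
    have hfar := hsep hep.2 hep'.2 hne
    nlinarith [hB e hep.1, hB e' hep'.1, hh.error_nonneg]
  simpa using heq

-- `B` consists of the expansions in base `2 ^ i` with `k` digits in `s`.
lemma exists_card_eq_pow_of_separated (hρ : 0 < ρ) (hA : 4 * A ≤ ρ)
    (hi : 60 * R + 40 ≤ (4 : ℝ) ^ i) (hs : ∀ p ∈ s, h p ≤ R * ρ)
    (hsep : (s : Set Γ).Pairwise fun p q ↦ ρ < h (p - q)) (k : ℕ) :
    ∃ B : Finset Γ, B.card = s.card ^ k ∧ ∀ e ∈ B, h e ≤ (4 : ℝ) ^ (i * k) * ρ / 20 := by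
  classical
  induction k with
  | zero =>
    refine ⟨{0}, by simp, ?_⟩
    simp only [Finset.mem_singleton, forall_eq, hh.map_zero]
    positivity
  | succ k ih =>
    obtain ⟨B, hcard, hB⟩ := ih
    refine ⟨(B ×ˢ s).image fun z ↦ z.1 + 2 ^ (i * k) • z.2, ?_, ?_⟩
    · rw [Finset.card_image_of_injOn (hh.injOn_add_two_pow_nsmul hρ hA hB hsep),
        Finset.card_product, hcard, pow_succ]
    · simp only [Finset.mem_image, Finset.mem_product, Prod.exists]
      rintro _ ⟨e, p, ⟨he, hp⟩, rfl⟩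
      calc h (e + 2 ^ (i * k) • p) ≤ 3 * h e + 3 * h (2 ^ (i * k) • p) + A := hh.add_le _ _
        _ ≤ 3 * (4 ^ (i * k) * ρ / 20) + 3 * (4 ^ (i * k) * (R * ρ + ρ / 4)) := by
          have hdigit : (4 : ℝ) ^ (i * k) * (h p + A) ≤ 4 ^ (i * k) * (R * ρ + ρ / 4) := by
            gcongr
            · exact hs p hp
            · linarith
          linarith [hB e he, hh.two_pow_nsmul_le (i * k) p, hh.error_nonneg]
        _ = 4 ^ (i * k) * ((60 * R + 18) * ρ) / 20 := by ring
        _ ≤ 4 ^ (i * k) * (4 ^ i * ρ) / 20 := by gcongr; linarith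
        _ = 4 ^ (i * (k + 1)) * ρ / 20 := by rw [mul_add, pow_add, mul_one]; ring

lemma card_le_of_sub_mem_range (hρ : 0 < ρ) (hA : 4 * A ≤ ρ) {k : ℕ} {e₀ : Γ} {t : Finset Γ}
    (he₀ : h e₀ ≤ (4 : ℝ) ^ k * ρ / 20) (ht : ∀ e ∈ t, h e ≤ (4 : ℝ) ^ k * ρ / 20)
    (hmem : ∀ e ∈ t, e - e₀ ∈ (nsmulAddMonoidHom (α := Γ) (2 ^ k)).range) :
    (t.card : ℝ) ≤ 100 * Real.exp (12 * ρ) := by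
  classical
  choose! g hg using hmem
  simp only [nsmulAddMonoidHom_apply] at hg
  have hinj : Set.InjOn g t := fun e he e' he' heq ↦
    sub_left_injective ((hg e he).symm.trans (heq ▸ hg e' he'))
  rw [← Finset.card_image_of_injOn hinj]
  refine hh.card_le _ ρ hρ.le (Finset.forall_mem_image.mpr fun e he ↦ ?_)
  have hpow : (0 : ℝ) < 4 ^ k := by positivity
  have hlower := hg e he ▸ hh.le_two_pow_nsmul k (g e)
  have hupper := hh.sub_le e e₀
  have hbound : (4 : ℝ) ^ k * (h (g e) - A) ≤ 4 ^ k * (6 * ρ / 20) := by linarith [ht e he]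
  linarith [le_of_mul_le_mul_left hbound hpow]

lemma exists_separated_covering (hρ : 0 ≤ ρ) (s : Finset Γ) :
    ∃ t ⊆ s, (t : Set Γ).Pairwise (fun p q ↦ ρ < h (p - q)) ∧
      ∀ p ∈ s, ∃ c ∈ t, h (p - c) ≤ ρ := by
  classical
  let Separated (t : Finset Γ) : Prop := (t : Set Γ).Pairwise fun p q ↦ ρ < h (p - q)
  obtain ⟨t, ht⟩ := (s.powerset.filter Separated).exists_maximal ⟨∅, by simp [Separated]⟩
  obtain ⟨hts, hsep⟩ : t ⊆ s ∧ Separated t := by simpa using ht.prop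
  refine ⟨t, hts, hsep, fun p hp ↦ ?_⟩
  by_contra! hfar
  have hpt : p ∉ t := fun hpt ↦ (hfar p hpt).not_ge (by rwa [sub_self, hh.map_zero])
  have hinsert : Separated (insert p t) := by
    simp only [Separated, Finset.coe_insert]
    exact Set.Pairwise.insert hsep fun q hq _ ↦ ⟨hfar q hq, hh.map_sub_comm p q ▸ hfar q hq⟩
  have hmem : insert p t ∈ s.powerset.filter Separated := by
    simp [Finset.insert_subset_iff, hp, hts, hinsert]
  exact hpt (ht.le_of_ge hmem (Finset.subset_insert p t) (Finset.mem_insert_self p t))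

variable [AddGroup.FG Γ]

lemma card_le_of_separated (hρ : 0 < ρ) (hA : 4 * A ≤ ρ)
    (hi : 60 * R + 40 ≤ (4 : ℝ) ^ i) (hs : ∀ p ∈ s, h p ≤ R * ρ)
    (hsep : (s : Set Γ).Pairwise fun p q ↦ ρ < h (p - q)) :
    s.card ≤ (2 ^ i) ^ grpRank Γ := by
  obtain ⟨κ, hκ⟩ := exists_index_range_nsmul_le Γ
  set q : ℕ := (2 ^ i) ^ grpRank Γ with hq
  have hpow (k : ℕ) : (s.card : ℝ) ^ k ≤ κ * (100 * Real.exp (12 * ρ)) * q ^ k := by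
    obtain ⟨B, hcard, hB⟩ := hh.exists_card_eq_pow_of_separated hρ hA hi hs hsep k
    obtain ⟨hindex, hle⟩ := hκ (2 ^ (i * k)) (by positivity)
    have hBcard := card_le_index_mul_of_card_le hindex (B := B) (C := 100 * Real.exp (12 * ρ))
      (by positivity) fun e₀ he₀ t ht ↦
        hh.card_le_of_sub_mem_range hρ hA (hB e₀ he₀) fun e he ↦ hB e (ht he)
    calc (s.card : ℝ) ^ k = B.card := by rw [hcard]; push_cast; rfl
      _ ≤ ((κ * (2 ^ (i * k)) ^ grpRank Γ : ℕ) : ℝ) * (100 * Real.exp (12 * ρ)) :=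
        hBcard.trans (by gcongr)
      _ = κ * (100 * Real.exp (12 * ρ)) * q ^ k := by rw [hq]; push_cast; ring
  by_contra! hlt
  have hq₀ : (0 : ℝ) < q := by positivity
  have hratio : 1 < (s.card : ℝ) / q := (one_lt_div hq₀).mpr (by exact_mod_cast hlt)
  obtain ⟨k, hk⟩ := pow_unbounded_of_one_lt (κ * (100 * Real.exp (12 * ρ))) hratio
  rw [div_pow, lt_div_iff₀ (pow_pos hq₀ k)] at hk
  exact hk.not_ge (hpow k)

lemma exists_close_subset (hρ : 0 < ρ) (hA : 4 * A ≤ ρ)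
    (hi : 60 * R + 40 ≤ (4 : ℝ) ^ i) (hs : ∀ p ∈ s, h p ≤ R * ρ) (hne : s.Nonempty) :
    ∃ c ∈ s, ∃ t ⊆ s, (∀ p ∈ t, h (p - c) ≤ ρ) ∧ s.card ≤ (2 ^ i) ^ grpRank Γ * t.card := by
  classical
  obtain ⟨t, hts, hsep, hcover⟩ := hh.exists_separated_covering hρ.le s
  let ball (c : Γ) : Finset Γ := s.filter fun p ↦ h (p - c) ≤ ρ
  have hsub : s ⊆ t.biUnion ball := fun p hp ↦ by
    simpa [ball, hp] using hcover p hp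
  have htne : t.Nonempty := hne.elim fun p hp ↦ (hcover p hp).imp fun _ ↦ And.left
  obtain ⟨c, hc, hmax⟩ := t.exists_max_image (fun c ↦ (ball c).card) htne
  refine ⟨c, hts hc, ball c, Finset.filter_subset _ _, fun p hp ↦ (Finset.mem_filter.mp hp).2, ?_⟩
  calc s.card ≤ (t.biUnion ball).card := Finset.card_le_card hsub
    _ ≤ t.card * (ball c).card := Finset.card_biUnion_le_card_mul _ _ _ hmax
    _ ≤ (2 ^ i) ^ grpRank Γ * (ball c).card := by
        gcongr
        exact hh.card_le_of_separated hρ hA hi (fun p hp ↦ hs p (hts hp)) hsep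

variable {ι : Type*} {S : Finset ι} {P : ι → Γ}

lemma exists_close_subset_of_injOn (hρ : 0 < ρ) (hA : 4 * A ≤ ρ)
    (hi : 60 * R + 40 ≤ (4 : ℝ) ^ i) (hP : Set.InjOn P S) (hs : ∀ k ∈ S, h (P k) ≤ R * ρ)
    (hne : S.Nonempty) :
    ∃ c ∈ S, ∃ t ⊆ S, (∀ k ∈ t, h (P k - P c) ≤ ρ) ∧
      S.card ≤ (2 ^ i) ^ grpRank Γ * t.card := by
  classical
  obtain ⟨_, hc, T, hT, hclose, hcard⟩ := hh.exists_close_subset hρ hA hi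
    (Finset.forall_mem_image.mpr hs) (hne.image P)
  obtain ⟨c, hcS, rfl⟩ := Finset.mem_image.mp hc
  obtain ⟨t, ht, rfl⟩ := Finset.subset_image_iff.mp hT
  rw [Finset.card_image_of_injOn hP, Finset.card_image_of_injOn (hP.mono ht)] at hcard
  exact ⟨c, hcS, t, by simpa using ht, fun k hk ↦ hclose _ (Finset.mem_image_of_mem P hk), hcard⟩

end Separated

variable [AddGroup.FG Γ] {ι : Type*} {S : Finset ι} {P : ι → Γ} {L R C H : ℝ} {i : ℕ}

lemma card_le_or_exists_close_subset (hL : 0 < L) (hA : 96 * A ≤ L) (hR : 1 ≤ R) (hC : 1 ≤ C)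
    (hi : 60 * (48 * R * C) + 40 ≤ (4 : ℝ) ^ i) (hP : Set.InjOn P S)
    (hs : ∀ k ∈ S, h (P k) ≤ R * (H + L)) :
    (S.card : ℝ) ≤ (2 ^ i) ^ grpRank Γ * (100 * Real.exp (L / 2)) ∨
    (C * L < H ∧ ∃ c ∈ S, ∃ t ⊆ S, (∀ k ∈ t, h (P k - P c) ≤ H / C) ∧
      (S.card : ℝ) ≤ (2 ^ i) ^ grpRank Γ * t.card) := by
  classical
  rcases S.eq_empty_or_nonempty with rfl | hne
  · left
    simp only [Finset.card_empty, Nat.cast_zero]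
    positivity
  have hcluster {ρ : ℝ} (hρ : L / 24 ≤ ρ) (hle : H + L ≤ 48 * C * ρ) :
      ∃ c ∈ S, ∃ t ⊆ S, (∀ k ∈ t, h (P k - P c) ≤ ρ) ∧
        (S.card : ℝ) ≤ (2 ^ i) ^ grpRank Γ * t.card := by
    exact_mod_cast hh.exists_close_subset_of_injOn (by linarith) (by linarith) hi hP
      (fun k hk ↦ (hs k hk).trans (by nlinarith)) hne
  rcases lt_or_ge (C * L) H with hlarge | hsmall
  · have hLH : L < H / C := (lt_div_iff₀ (by linarith)).mpr (by linarith)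
    refine .inr ⟨hlarge, hcluster (by linarith) ?_⟩
    rw [mul_assoc, mul_div_cancel₀ _ (by linarith)]
    nlinarith
  · obtain ⟨c, -, t, htS, hclose, hcard⟩ := hcluster le_rfl (by nlinarith)
    have hinj : Set.InjOn (fun k ↦ P k - P c) t :=
      sub_left_injective.comp_injOn (hP.mono (by simpa using htS))
    have htcard := hh.card_le (t.image fun k ↦ P k - P c) (L / 24) (by linarith)
      (Finset.forall_mem_image.mpr hclose)
    rw [Finset.card_image_of_injOn hinj, show 12 * (L / 24) = L / 2 by ring] at htcard
    exact .inl (hcard.trans (by gcongr))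

end IsHeight

end Packing

/-! ### Points whose coordinates form a progression -/

section Collinear

/-- The points `(k, X k)` with `k ∈ S` lie on a line. -/
def IsCollinearOn {F : Type*} [Field F] (X : ℤ → F) (S : Finset ℤ) : Prop :=
  ∀ k : Fin 3 → ℤ, (∀ i, k i ∈ S) → affineDet (fun i ↦ X (k i)) (fun i ↦ (k i : F)) = 0

lemma affineDet_sub_const {F : Type*} [Field F] (x m : Fin 3 → F) (c : F) :
    affineDet x (fun i ↦ m i - c) = affineDet x m := by
  simp only [affineDet]
  ring

lemma IsCollinearOn.exists_eq_add_mul {F : Type*} [Field F] [CharZero F] {X : ℤ → F}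
    {S : Finset ℤ} (hX : IsCollinearOn X S) : ∃ α β : F, ∀ k ∈ S, X k = α + β * k := by
  by_cases hS : (S : Set ℤ).Subsingleton
  · rcases S.eq_empty_or_nonempty with rfl | ⟨u, hu⟩
    · exact ⟨0, 0, by simp⟩
    · exact ⟨X u, 0, fun k hk ↦ by rw [hS hk hu]; ring⟩
  · obtain ⟨u, hu, v, hv, huv⟩ := Set.not_subsingleton_iff.mp hS
    have huv' : (u : F) - v ≠ 0 := sub_ne_zero.mpr (Int.cast_injective.ne huv)
    refine ⟨X u - (X u - X v) / (u - v) * u, (X u - X v) / (u - v), fun k hk ↦ ?_⟩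
    have hdet := hX ![k, u, v] (by simp [Fin.forall_fin_succ, hk, Finset.mem_coe.mp hu,
      Finset.mem_coe.mp hv])
    simp only [affineDet, Matrix.cons_val] at hdet
    field_simp
    linear_combination hdet

lemma exists_isCollinearOn_filter_lt {F : Type*} [Field F] {X : ℤ → F} {S : Finset ℤ}
    (h : ℤ → ℝ) (hX : ¬ IsCollinearOn X S) :
    ∃ H : ℝ, IsCollinearOn X (S.filter fun k ↦ h k < H) ∧
      ∃ k : Fin 3 → ℤ, (∀ i, k i ∈ S ∧ h (k i) ≤ H) ∧
        affineDet (fun i ↦ X (k i)) (fun i ↦ (k i : F)) ≠ 0 := by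
  classical
  let triples : Finset (Fin 3 → ℤ) := (Fintype.piFinset fun _ ↦ S).filter
    fun k ↦ affineDet (fun i ↦ X (k i)) (fun i ↦ (k i : F)) ≠ 0
  let maxHeight (k : Fin 3 → ℤ) : ℝ := Finset.univ.sup' Finset.univ_nonempty fun i ↦ h (k i)
  have hne : triples.Nonempty := by
    obtain ⟨k, hk⟩ : ∃ k : Fin 3 → ℤ, ¬ ((∀ i, k i ∈ S) → _) := not_forall.mp hX
    exact ⟨k, by simpa [triples] using hk⟩
  obtain ⟨k, hk, hmin⟩ := triples.exists_min_image maxHeight hne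
  obtain ⟨hkS, hdet⟩ : (∀ i, k i ∈ S) ∧ _ ≠ _ := by simpa [triples] using hk
  refine ⟨maxHeight k, fun l hl ↦ ?_, k, fun i ↦ ⟨hkS i, ?_⟩, hdet⟩
  · by_contra hcon
    simp only [Finset.mem_filter] at hl
    refine (hmin l ?_).not_gt ((Finset.sup'_lt_iff _).mpr fun i _ ↦ (hl i).2)
    simpa [triples] using ⟨fun i ↦ (hl i).1, hcon⟩
  · exact Finset.le_sup' (fun i ↦ h (k i)) (Finset.mem_univ i)

end Collinear

section Progressions

open WeierstrassCurve

variable {W : WeierstrassCurve ℚ} {N : ℕ} {S : Finset ℤ}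
  {P : ℤ → W.toAffine.Point} {α β l μ ν : ℚ} {L : ℝ}

lemma abs_intCast_sub_le_of_mem_Icc {k l : ℤ} (hk : k ∈ Finset.Icc (1 : ℤ) N)
    (hl : l ∈ Finset.Icc (1 : ℤ) N) : |((k - l : ℤ) : ℝ)| ≤ N := by
  rw [Finset.mem_Icc] at hk hl
  exact_mod_cast abs_le.mpr ⟨by omega, by omega⟩

lemma injOn_of_xCoord_eq (hβ : β ≠ 0) (hX : ∀ k ∈ S, xCoord (P k) = α + β * k) :
    Set.InjOn P S := fun k hk m hm hkm ↦ by
  have h := (hX k hk).symm.trans ((congrArg xCoord hkm).trans (hX m hm))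
  exact_mod_cast mul_left_cancel₀ hβ (add_left_cancel h)

lemma injOn_of_yCoord_eq (hν : ν ≠ 0) (hY : ∀ k ∈ S, yCoord (P k) = l * xCoord (P k) + μ + ν * k) :
    Set.InjOn P S := fun k hk m hm hkm ↦ by
  have h := (hY k hk).symm.trans ((congrArg yCoord hkm).trans (hY m hm))
  rw [hkm] at h
  exact_mod_cast mul_left_cancel₀ hν (add_left_cancel h)

variable [W.IsElliptic]

lemma pos_of_log_add_le (hL : Real.log N + (20000 * heightError W.j + 1) ≤ L) : 0 < L := by
  linarith [Real.log_natCast_nonneg N, heightError_nonneg W.j]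

lemma one_le_two_pow_pow_mul_exp (hL : 0 ≤ L) (i n : ℕ) :
    (1 : ℝ) ≤ (2 ^ i) ^ n * Real.exp (L / 2) :=
  one_le_mul_of_one_le_of_one_le (one_le_pow₀ (one_le_pow₀ one_le_two))
    (Real.one_le_exp (by positivity))

section XProgression

variable (hS : S ⊆ Finset.Icc 1 (N : ℤ)) (hP : ∀ k ∈ S, P k ≠ 0)
  (hX : ∀ k ∈ S, xCoord (P k) = α + β * k)
  (hL : Real.log N + (20000 * heightError W.j + 1) ≤ L)

include hS hP hX hL

lemma height_le_of_xCoord_eq {k k₀ k₁ : ℤ} (hk : k ∈ S) (hk₀ : k₀ ∈ S) (hk₁ : k₁ ∈ S)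
    (hne : k₁ ≠ k₀) : height W (P k) ≤ height W (P k₀) + height W (P k₁) + L := by
  have h := height_le_of_linear (d := k₁ - k₀) (d₁ := k₁ - k) (d₂ := k₀ - k) (hP k hk)
    (hP k₀ hk₀) (hP k₁ hk₁) (by rw [hX k hk, hX k₀ hk₀, hX k₁ hk₁]; push_cast; ring)
    (sub_ne_zero.mpr hne) (abs_intCast_sub_le_of_mem_Icc (hS hk₁) (hS hk₀))
    (abs_intCast_sub_le_of_mem_Icc (hS hk₁) (hS hk))
    (abs_intCast_sub_le_of_mem_Icc (hS hk₀) (hS hk))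
  linarith [heightError_nonneg W.j]

lemma height_le_of_xCoord_eq_sub (hβ : β ≠ 0) {c u v : ℤ} (hc : c ∈ S) (hu : u ∈ S) (hv : v ∈ S)
    (huc : u ≠ c) (hvc : v ≠ c) (huv : u ≠ v) :
    height W (P c) ≤ height W (P u - P c) + height W (P v - P c) + L := by
  have hinj := injOn_of_xCoord_eq hβ hX
  have h := height_le_of_linear_sub (d := v - u) (d₁ := v - c) (d₂ := u - c) (hP c hc)
    (hinj.ne hu hc huc) (hinj.ne hv hc hvc)
    (by rw [hX c hc, hX u hu, hX v hv]; push_cast; ring)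
    (sub_ne_zero.mpr huv.symm) (abs_intCast_sub_le_of_mem_Icc (hS hv) (hS hu))
    (abs_intCast_sub_le_of_mem_Icc (hS hv) (hS hc))
    (abs_intCast_sub_le_of_mem_Icc (hS hu) (hS hc))
  linarith [heightError_nonneg W.j]

lemma card_le_two_of_xCoord_eq (hβ : β ≠ 0) {c : ℤ} {t : Finset ℤ} (hc : c ∈ S) (ht : t ⊆ S)
    {r : ℝ} (hclose : ∀ k ∈ t, height W (P k - P c) ≤ r) (hr : 2 * r + L < height W (P c)) :
    t.card ≤ 2 := by
  suffices h : (t.erase c).card ≤ 1 by have := t.pred_card_le_card_erase (a := c); omega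
  refine Finset.card_le_one.mpr fun u hu v hv ↦ ?_
  rw [Finset.mem_erase] at hu hv
  by_contra huv
  linarith [height_le_of_xCoord_eq_sub hS hP hX hL hβ hc (ht hu.2) (ht hv.2) hu.1 hv.1 huv,
    hclose u hu.2, hclose v hv.2]

lemma card_le_of_xCoord_eq (hβ : β ≠ 0) :
    (S.card : ℝ) ≤ 102 * ((2 ^ 8) ^ grpRank W.toAffine.Point * Real.exp (L / 2)) := by
  have hfg := addGroup_fg W
  have hL₀ := pos_of_log_add_le hL
  set n := grpRank W.toAffine.Point
  have hone := one_le_two_pow_pow_mul_exp hL₀.le 8 n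
  rcases S.eq_empty_or_nonempty with rfl | hne
  · simp only [Finset.card_empty, Nat.cast_zero]
    positivity
  obtain ⟨k₀, hk₀, hmin₀⟩ := S.exists_min_image (fun k ↦ height W (P k)) hne
  have hcard : (S.card : ℝ) = (S.erase k₀).card + 1 := by
    exact_mod_cast (Finset.card_erase_add_one hk₀).symm
  rcases (S.erase k₀).eq_empty_or_nonempty with hempty | hne₁
  · rw [hcard, hempty, Finset.card_empty, Nat.cast_zero]
    linarith
  obtain ⟨k₁, hk₁, hmin₁⟩ := (S.erase k₀).exists_min_image (fun k ↦ height W (P k)) hne₁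
  have hsub := S.erase_subset k₀
  have hbound (k : ℤ) (hk : k ∈ S.erase k₀) : height W (P k) ≤ 2 * (height W (P k₁) + L) := by
    linarith [hmin₀ k₁ (hsub hk₁), height_le_of_xCoord_eq hS hP hX hL (hsub hk) hk₀ (hsub hk₁)
      (Finset.ne_of_mem_erase hk₁)]
  rcases (isHeight_height W).card_le_or_exists_close_subset (C := 8) (i := 8) hL₀
    (by linarith [heightError_nonneg W.j, Real.log_natCast_nonneg N]) one_le_two (by norm_num)
    (by norm_num) ((injOn_of_xCoord_eq hβ hX).mono (by simp)) hbound with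
    hsmall | ⟨hlarge, c, hc, t, ht, hclose, hSt⟩
  · linarith
  · have htcard : (t.card : ℝ) ≤ 2 := by
      exact_mod_cast card_le_two_of_xCoord_eq hS hP hX hL hβ (hsub hc) (ht.trans hsub) hclose
        (by linarith [hmin₁ c hc])
    have hexp : (1 : ℝ) ≤ Real.exp (L / 2) := Real.one_le_exp (by positivity)
    calc (S.card : ℝ) = (S.erase k₀).card + 1 := hcard
      _ ≤ (2 ^ 8) ^ n * t.card + (2 ^ 8) ^ n * Real.exp (L / 2) := add_le_add hSt hone
      _ ≤ (2 ^ 8) ^ n * (2 * Real.exp (L / 2)) + (2 ^ 8) ^ n * Real.exp (L / 2) := by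
        gcongr
        linarith
      _ ≤ 102 * ((2 ^ 8) ^ n * Real.exp (L / 2)) := by linarith

omit hX in
lemma card_le_of_isCollinearOn (hinj : Set.InjOn P S)
    (hcol : IsCollinearOn (fun k ↦ xCoord (P k)) S) :
    (S.card : ℝ) ≤ 102 * ((2 ^ 8) ^ grpRank W.toAffine.Point * Real.exp (L / 2)) := by
  classical
  obtain ⟨α, β, hX⟩ := hcol.exists_eq_add_mul
  by_cases hβ : β = 0
  · have hone := one_le_two_pow_pow_mul_exp (pos_of_log_add_le hL).le 8 (grpRank W.toAffine.Point)
    suffices hcard : S.card ≤ 2 by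
      have : (S.card : ℝ) ≤ 2 := by exact_mod_cast hcard
      linarith
    rcases S.eq_empty_or_nonempty with rfl | ⟨u, hu⟩
    · simp
    rw [← Finset.card_image_of_injOn hinj]
    refine (Finset.card_le_card (t := {P u, -P u}) ?_).trans Finset.card_le_two
    refine Finset.image_subset_iff.mpr fun k hk ↦ ?_
    simpa using eq_or_eq_neg_of_xCoord_eq (hP k hk) (hP u hu) (by
      rw [hX k hk, hX u hu, hβ, zero_mul, zero_mul])
  · exact card_le_of_xCoord_eq hS hP hX hL hβ

end XProgression

section YProgression

variable (hS : S ⊆ Finset.Icc 1 (N : ℤ)) (hP : ∀ k ∈ S, P k ≠ 0)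
  (hY : ∀ k ∈ S, yCoord (P k) = l * xCoord (P k) + μ + ν * k)
  (hL : Real.log N + (20000 * heightError W.j + 1) ≤ L)

omit [W.IsElliptic] in
include hY in
lemma yCoord_eq_of_yCoord_eq {k m : ℤ} (hk : k ∈ S) (hm : m ∈ S) : yCoord (P m)
    = yCoord (P k) + l * (xCoord (P m) - xCoord (P k)) + ν * ((m - k : ℤ) : ℚ) := by
  rw [hY k hk, hY m hm]
  push_cast
  ring

include hS hP hY hL

lemma height_le_of_yCoord_eq {k : ℤ} (hk : k ∈ S) {m : Fin 3 → ℤ} (hm : ∀ i, m i ∈ S)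
    (hdet : affineDet (fun i ↦ xCoord (P (m i))) (fun i ↦ (m i : ℚ)) ≠ 0) :
    height W (P k) ≤ 3 * ∑ i, height W (P (m i)) + 2 * L := by
  have h := height_le_of_affine (N := N) (m := fun i ↦ m i - k) (hP k hk) (fun i ↦ hP _ (hm i))
    (fun i ↦ yCoord_eq_of_yCoord_eq hY hk (hm i)) ?_
    (fun i ↦ abs_intCast_sub_le_of_mem_Icc (hS (hm i)) (hS hk))
    (by simpa only [Int.cast_sub, affineDet_sub_const] using hdet)
  · linarith [heightError_nonneg W.j]
  · have := Finset.mem_Icc.mp (hS hk)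
    omega

lemma height_le_of_yCoord_eq_sub (hν : ν ≠ 0) {c : ℤ} (hc : c ∈ S) {m : Fin 3 → ℤ}
    (hm : ∀ i, m i ∈ S.erase c)
    (hdet : affineDet (fun i ↦ xCoord (P (m i) - P c)) (fun i ↦ (m i : ℚ)) ≠ 0) :
    height W (P c) ≤ 3 * ∑ i, height W (P (m i) - P c) + 2 * L := by
  simp only [Finset.mem_erase] at hm
  have h := height_le_of_affine_sub (N := N) (m := fun i ↦ m i - c) (hP c hc)
    (fun i ↦ hP _ (hm i).2)
    (fun i ↦ (injOn_of_yCoord_eq hν hY).ne (hm i).2 hc (hm i).1)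
    (fun i ↦ yCoord_eq_of_yCoord_eq hY hc (hm i).2) ?_
    (fun i ↦ abs_intCast_sub_le_of_mem_Icc (hS (hm i).2) (hS hc))
    (by simpa only [Int.cast_sub, affineDet_sub_const] using hdet)
  · linarith [heightError_nonneg W.j]
  · have := Finset.mem_Icc.mp (hS hc)
    omega

lemma card_le_of_height_sub_le (hν : ν ≠ 0) {c : ℤ} {t : Finset ℤ} (hc : c ∈ S) (ht : t ⊆ S)
    {r : ℝ} (hclose : ∀ k ∈ t, height W (P k - P c) ≤ r) (hr : 9 * r + 2 * L < height W (P c)) :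
    (t.card : ℝ) ≤ 103 * ((2 ^ 8) ^ grpRank W.toAffine.Point * Real.exp (L / 2)) := by
  have hinj := injOn_of_yCoord_eq hν hY
  have hsub : t.erase c ⊆ S := (t.erase_subset c).trans ht
  have hcol : IsCollinearOn (fun k ↦ xCoord (P k - P c)) (t.erase c) := by
    intro m hm
    by_contra hdet
    have hle := height_le_of_yCoord_eq_sub hS hP hY hL hν hc
      (fun i ↦ Finset.erase_subset_erase c ht (hm i)) hdet
    have hsum : ∑ i, height W (P (m i) - P c) ≤ ∑ _i : Fin 3, r :=
      Finset.sum_le_sum fun i _ ↦ hclose _ (Finset.mem_of_mem_erase (hm i))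
    simp only [Finset.sum_const, Finset.card_univ, Fintype.card_fin, nsmul_eq_mul] at hsum
    push_cast at hsum
    linarith
  have herase := card_le_of_isCollinearOn (P := fun k ↦ P k - P c) (hsub.trans hS)
    (fun k hk ↦ sub_ne_zero.mpr (hinj.ne (hsub hk) hc (Finset.ne_of_mem_erase hk))) hL
    (sub_left_injective.comp_injOn (hinj.mono (Finset.coe_subset.mpr hsub))) hcol
  have hcard : (t.card : ℝ) ≤ (t.erase c).card + 1 := by
    exact_mod_cast Nat.le_add_of_sub_le t.pred_card_le_card_erase
  linarith [one_le_two_pow_pow_mul_exp (pos_of_log_add_le hL).le 8 (grpRank W.toAffine.Point)]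

lemma card_le_of_le_height (hν : ν ≠ 0) {H : ℝ} {T : Finset ℤ} (hTS : T ⊆ S)
    (hT : ∀ k ∈ T, H ≤ height W (P k) ∧ height W (P k) ≤ 9 * (H + L)) :
    (T.card : ℝ) ≤ 103 * ((2 ^ 18) ^ grpRank W.toAffine.Point * Real.exp (L / 2)) := by
  have hfg := addGroup_fg W
  have hL₀ := pos_of_log_add_le hL
  set n := grpRank W.toAffine.Point
  rcases (isHeight_height W).card_le_or_exists_close_subset (C := 12) (i := 10) hL₀
    (by linarith [heightError_nonneg W.j, Real.log_natCast_nonneg N]) (by norm_num) (by norm_num)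
    (by norm_num) ((injOn_of_yCoord_eq hν hY).mono (Finset.coe_subset.mpr hTS))
    (fun k hk ↦ (hT k hk).2) with hsmall | ⟨hlarge, c, hc, t, ht, hclose, hcard⟩
  · calc (T.card : ℝ) ≤ (2 ^ 10) ^ n * (100 * Real.exp (L / 2)) := hsmall
      _ ≤ (2 ^ 18) ^ n * (103 * Real.exp (L / 2)) := by gcongr <;> norm_num
      _ = 103 * ((2 ^ 18) ^ n * Real.exp (L / 2)) := by ring
  · calc (T.card : ℝ) ≤ (2 ^ 10) ^ n * t.card := hcard
      _ ≤ (2 ^ 10) ^ n * (103 * ((2 ^ 8) ^ n * Real.exp (L / 2))) := by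
        gcongr
        exact card_le_of_height_sub_le hS hP hY hL hν (hTS hc) (ht.trans hTS) hclose
          (by linarith [(hT c hc).1])
      _ = 103 * ((2 ^ 10 * 2 ^ 8) ^ n * Real.exp (L / 2)) := by rw [mul_pow]; ring
      _ = 103 * ((2 ^ 18) ^ n * Real.exp (L / 2)) := by norm_num

lemma card_le_of_yCoord_eq (hν : ν ≠ 0) :
    (S.card : ℝ) ≤ 205 * ((2 ^ 18) ^ grpRank W.toAffine.Point * Real.exp (L / 2)) := by
  classical
  have hinj := injOn_of_yCoord_eq hν hY
  have hL₀ := pos_of_log_add_le hL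
  set n := grpRank W.toAffine.Point
  have hmono : (2 ^ 8) ^ n * Real.exp (L / 2) ≤ (2 ^ 18) ^ n * Real.exp (L / 2) := by
    gcongr <;> norm_num
  by_cases hcol : IsCollinearOn (fun k ↦ xCoord (P k)) S
  · linarith [card_le_of_isCollinearOn hS hP hL hinj hcol, Real.exp_pos (L / 2)]
  obtain ⟨H, hlow, m, hm, hdet⟩ := exists_isCollinearOn_filter_lt (fun k ↦ height W (P k)) hcol
  have hlow_sub := S.filter_subset fun k ↦ height W (P k) < H
  have hlow_card := card_le_of_isCollinearOn (hlow_sub.trans hS) (fun k hk ↦ hP k (hlow_sub hk)) hL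
    (hinj.mono (Finset.coe_subset.mpr hlow_sub)) hlow
  have hhigh_card := card_le_of_le_height hS hP hY hL hν (H := H)
    (S.filter_subset fun k ↦ ¬ height W (P k) < H) fun k hk ↦ by
      obtain ⟨hkS, hHk⟩ := Finset.mem_filter.mp hk
      have hle := height_le_of_yCoord_eq hS hP hY hL hkS (fun i ↦ (hm i).1) hdet
      rw [Fin.sum_univ_three] at hle
      exact ⟨not_lt.mp hHk, by linarith [(hm 0).2, (hm 1).2, (hm 2).2]⟩
  have hsplit : (S.card : ℝ) = (S.filter fun k ↦ height W (P k) < H).card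
      + (S.filter fun k ↦ ¬ height W (P k) < H).card := by
    exact_mod_cast (Finset.card_filter_add_card_filter_not _).symm
  linarith

end YProgression

end Progressions

lemma log_le_of_le_mul_exp {N n : ℕ} {e : ℝ} (hN₀ : N ≠ 0) (he : 0 ≤ e)
    (hN : (N : ℝ) ≤ 205 * ((2 ^ 18) ^ n * Real.exp ((Real.log N + (e + 1)) / 2))) :
    Real.log N ≤ (e + 41) * (1 + n) := by
  have hlog := Real.log_le_log (by positivity) hN
  rw [Real.log_mul (by positivity) (by positivity), Real.log_mul (by positivity) (by positivity),
    Real.log_exp, Real.log_pow, Real.log_pow] at hlog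
  have hlog2 : Real.log 2 ≤ 1 := by linarith [Real.log_two_lt_d9]
  have hlog205 : Real.log 205 ≤ 8 := by
    have h : Real.log 205 ≤ Real.log (2 ^ 8) := Real.log_le_log (by norm_num) (by norm_num)
    rw [Real.log_pow] at h
    push_cast at h
    linarith
  push_cast at hlog
  have hrank : (n : ℝ) * (18 * Real.log 2) ≤ n * 18 := by
    gcongr
    linarith
  calc Real.log N ≤ e + 17 + 36 * n := by linarith
    _ ≤ (e + 41) * (1 + n) := by nlinarith [mul_nonneg he n.cast_nonneg]

section Main

open WeierstrassCurve

variable {W : WeierstrassCurve ℚ} {N : ℕ} [NeZero N] {x y : Fin N → ℚ}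

/-- The `k`-th point, in `1`-based numbering, of a finite sequence of affine points; the value at
`k ∉ [1, N]` is irrelevant. -/
def pointSeq (hxy : ∀ i, W.toAffine.Nonsingular (x i) (y i)) (k : ℤ) : W.toAffine.Point :=
  .some _ _ (hxy (Fin.ofNat N (k - 1).toNat))

lemma pointSeq_ne_zero (hxy : ∀ i, W.toAffine.Nonsingular (x i) (y i)) (k : ℤ) :
    pointSeq hxy k ≠ 0 :=
  Affine.Point.some_ne_zero _

lemma natCast_ofNat_toNat_add_one {k : ℤ} (hk : k ∈ Finset.Icc 1 (N : ℤ)) :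
    (((Fin.ofNat N (k - 1).toNat : ℕ) + 1 : ℕ) : ℚ) = k := by
  rw [Finset.mem_Icc] at hk
  rw [Fin.val_ofNat, Nat.mod_eq_of_lt (by omega)]
  exact_mod_cast (by omega : (((k - 1).toNat + 1 : ℕ) : ℤ) = k)

lemma exists_xCoord_pointSeq_eq (hxy : ∀ i, W.toAffine.Nonsingular (x i) (y i))
    (hx : IsNontrivAP x) : ∃ α β : ℚ, β ≠ 0 ∧
      ∀ k ∈ Finset.Icc 1 (N : ℤ), xCoord (pointSeq hxy k) = α + β * k := by
  obtain ⟨a, b, hb, hab⟩ := hx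
  refine ⟨a + W.b₂ / 12, b, hb, fun k hk ↦ ?_⟩
  rw [← natCast_ofNat_toNat_add_one hk]
  simp only [pointSeq, xCoord, hab]
  ring

lemma exists_yCoord_pointSeq_eq (hxy : ∀ i, W.toAffine.Nonsingular (x i) (y i))
    (hy : IsNontrivAP y) : ∃ l μ ν : ℚ, ν ≠ 0 ∧ ∀ k ∈ Finset.Icc 1 (N : ℤ),
      yCoord (pointSeq hxy k) = l * xCoord (pointSeq hxy k) + μ + ν * k := by
  obtain ⟨a, b, hb, hab⟩ := hy
  refine ⟨W.a₁ / 2, a + W.a₃ / 2 - W.a₁ / 2 * (W.b₂ / 12), b, hb, fun k hk ↦ ?_⟩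
  rw [← natCast_ofNat_toNat_add_one hk]
  simp only [pointSeq, xCoord, yCoord, hab]
  ring

lemma natCast_le_of_isNontrivAP [W.IsElliptic]
    (hxy : ∀ i, W.toAffine.Nonsingular (x i) (y i)) (hAP : IsNontrivAP x ∨ IsNontrivAP y) :
    (N : ℝ) ≤ 205 * ((2 ^ 18) ^ grpRank W.toAffine.Point
      * Real.exp ((Real.log N + (20000 * heightError W.j + 1)) / 2)) := by
  have hcard : ((Finset.Icc 1 (N : ℤ)).card : ℝ) = N := by simp
  have hP := fun k (_ : k ∈ Finset.Icc 1 (N : ℤ)) ↦ pointSeq_ne_zero hxy k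
  rcases hAP with hx | hy
  · obtain ⟨α, β, hβ, hX⟩ := exists_xCoord_pointSeq_eq hxy hx
    have hle := card_le_of_xCoord_eq subset_rfl hP hX le_rfl hβ
    rw [hcard] at hle
    exact hle.trans (by gcongr <;> norm_num)
  · obtain ⟨l, μ, ν, hν, hY⟩ := exists_yCoord_pointSeq_eq hxy hy
    have hle := card_le_of_yCoord_eq subset_rfl hP hY le_rfl hν
    rwa [hcard] at hle

end Main

end ProgressionRank

/-- For every `j₀ ∈ ℚ` there is a constant `c > 0` such that for every elliptic curve `E/ℚ`
with `j`-invariant `j₀`, any non-trivial arithmetic progression of length `N ≥ 1` in the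
`x`-coordinates (or `y`-coordinates) of rational points forces
`1 + rank E(ℚ) ≥ c · log N`. -/
theorem rank_ge_of_arithmetic_progression (j₀ : ℚ) :
    ∃ c : ℝ, 0 < c ∧
      ∀ (W : WeierstrassCurve ℚ) [W.IsElliptic], W.j = j₀ →
        ∀ (N : ℕ), 1 ≤ N →
          ∀ x y : Fin N → ℚ,
            (∀ i, W.toAffine.Nonsingular (x i) (y i)) →
            (IsNontrivAP x ∨ IsNontrivAP y) →
            1 + (grpRank W.toAffine.Point : ℝ) ≥ c * Real.log N := by
  have herr := ProgressionRank.heightError_nonneg j₀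
  refine ⟨(20000 * ProgressionRank.heightError j₀ + 41)⁻¹, by positivity, ?_⟩
  rintro W _ rfl N hN x y hxy hAP
  have hN₀ : NeZero N := ⟨by omega⟩
  rw [ge_iff_le, inv_mul_le_iff₀ (by positivity)]
  exact ProgressionRank.log_le_of_le_mul_exp hN₀.out (by positivity)
    (ProgressionRank.natCast_le_of_isNontrivAP hxy hAP)
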